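/- arXiv:1701.01705 — 11 statements merged into one kernel-verified Lean document; each statement's English description precedes it below -/
import Mathlib

section
/- O'Neill formula for symplectic reductions of fanning curves (Theorem 4.6): In the reduction setting, let 𝐀(t) : ℓ(t) → ℓ(t) be the O'Neill endomorphism, i.e. the linear map determined by 𝐀(t)a_j(t) = P_𝔳(t)ȧ_j(t) for j ≤ k and 𝐀(t)a_j(t) = −P_𝔥(t)ȧ_j(t) for j > k, where P_𝔥(t), P_𝔳(t) are the projections associated with the decomposition V = 𝔥(t) ⊕ 𝔳(t) ⊕ h(t). Let K(t) be the Jacobi endomorphism of A, and let K_R(t) and W_R(t) be the Jacobi endomorphism and the Wronskian bilinear form of the reduced fanning frame Ā = (π∘a_1, …, π∘a_k) in (𝕎/𝕎^ω, ω_R). Then for every t and every u ∈ 𝔥(t) = ℓ(t) ∩ 𝕎: W_R(t)(K_R(t)π(u), π(u)) = W(t)(K(t)u, u) + 3·W(t)(𝐀(t)u, 𝐀(t)u), where W(t) is the Wronskian bilinear form of A on ℓ(t). -/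
section OneillHelpers

lemma oh_ind {E : Type*} [AddCommGroup E] [Module ℝ E] {ι : Type*} {a b : ι → E}
    (h : Submodule.span ℝ (Set.range (Sum.elim a b)) = ⊤) (P : E → Prop)
    (ha : ∀ i, P (a i)) (hb : ∀ i, P (b i)) (h0 : P 0)
    (hadd : ∀ x y, P x → P y → P (x + y)) (hs : ∀ (c : ℝ) x, P x → P (c • x)) (x : E) : P x := by
  have hx : x ∈ Submodule.span ℝ (Set.range (Sum.elim a b)) := by rw [h]; trivial
  induction hx using Submodule.span_induction with
  | mem x hx =>
    obtain ⟨i | i, rfl⟩ := hx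
    · exact ha i
    · exact hb i
  | zero => exact h0
  | add x y _ _ h1 h2 => exact hadd x y h1 h2
  | smul c x _ h1 => exact hs c x h1

lemma oh_bilin {E : Type*} [NormedAddCommGroup E] [NormedSpace ℝ E] [FiniteDimensional ℝ E]
    (ω : E →ₗ[ℝ] E →ₗ[ℝ] ℝ) {f g : ℝ → E} {f' g' : E} {t : ℝ}
    (hf : HasDerivAt f f' t) (hg : HasDerivAt g g' t) :
    HasDerivAt (fun s => ω (f s) (g s)) (ω f' (g t) + ω (f t) g') t := by
  let ωc : E →L[ℝ] E →L[ℝ] ℝ :=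
    LinearMap.toContinuousLinearMap
      ((LinearMap.toContinuousLinearMap : (E →ₗ[ℝ] ℝ) ≃ₗ[ℝ] (E →L[ℝ] ℝ)).toLinearMap ∘ₗ ω)
  have h := (ωc.hasFDerivAt.comp_hasDerivAt t hf).clm_apply hg
  exact h

lemma oh_const {G : Type*} [NormedAddCommGroup G] [NormedSpace ℝ G] {f : ℝ → G} {f' c : G} {t : ℝ}
    (h : HasDerivAt f f' t) (h0 : ∀ s, f s = c) : f' = 0 := by
  have : f = fun _ => c := funext h0
  rw [this] at h
  exact h.unique (hasDerivAt_const t c)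

/-- Collected algebraic facts about a fanning Lagrangian frame at a fixed time. -/
lemma oh_general {E : Type*} [NormedAddCommGroup E] [NormedSpace ℝ E] [FiniteDimensional ℝ E]
    {ι : Type*} [Fintype ι] (ω : E →ₗ[ℝ] E →ₗ[ℝ] ℝ) (halt : ∀ v, ω v v = 0)
    (A A' A2 A3 : ℝ → ι → E)
    (h1 : ∀ i t, HasDerivAt (fun s => A s i) (A' t i) t)
    (h2 : ∀ i t, HasDerivAt (fun s => A' s i) (A2 t i) t)
    (h3 : ∀ i t, HasDerivAt (fun s => A2 s i) (A3 t i) t)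
    (hsp : ∀ t, Submodule.span ℝ (Set.range (Sum.elim (A t) (A' t))) = ⊤)
    (hLag : ∀ t i j, ω (A t i) (A t j) = 0)
    (F F' F'' : ℝ → E →L[ℝ] E)
    (hF0 : ∀ t i, F t (A t i) = 0)
    (hF1 : ∀ t i, F t (A' t i) = A t i)
    (hFd : ∀ t, HasDerivAt F (F' t) t)
    (hFd' : ∀ t, HasDerivAt F' (F'' t) t)
    (Wb : ℝ → E →ₗ[ℝ] E →ₗ[ℝ] ℝ)
    (hWb : ∀ t i j, Wb t (A t i) (A t j) = ω (A t i) (A' t j)) (t : ℝ) :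
    (∀ x y, ω (F t x) y = - ω x (F t y)) ∧
    (∀ x, F t x ∈ Submodule.span ℝ (Set.range (A t))) ∧
    (∀ x y, Wb t (F t x) (F t y) = ω (F t x) y) ∧
    (∀ i, F' t (A' t i) = A' t i - F t (A2 t i)) ∧
    (∀ c : ι → ℝ, Wb t ((1/4 : ℝ) • F'' t (F'' t (∑ i, c i • A t i))) (∑ i, c i • A t i) =
      3/2 * ω (∑ i, c i • A' t i) (∑ i, c i • A2 t i)
      + 1/2 * ω (∑ i, c i • A t i) (∑ i, c i • A3 t i)
      - 3/4 * ω (F t (∑ i, c i • A2 t i)) (∑ i, c i • A2 t i)) := by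
  have hsw : ∀ x y, ω x y = - ω y x := by
    intro x y
    have := halt (x + y)
    simp only [map_add, LinearMap.add_apply, halt] at this
    linarith
  have hW : ∀ s i j, ω (A' s i) (A s j) + ω (A s i) (A' s j) = 0 := fun s i j =>
    oh_const (oh_bilin ω (h1 i s) (h1 j s)) (fun r => hLag r i j)
  have hFl : ∀ s x, F s x ∈ Submodule.span ℝ (Set.range (A s)) := by
    intro s x
    refine oh_ind (hsp s) (fun x => F s x ∈ Submodule.span ℝ (Set.range (A s))) ?_ ?_ ?_ ?_ ?_ x
    · intro i; simp only [hF0]; exact Submodule.zero_mem _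
    · intro i; simp only [hF1]; exact Submodule.subset_span ⟨i, rfl⟩
    · simp
    · intro x y hx hy; simp only [map_add]; exact Submodule.add_mem _ hx hy
    · intro c x hx; simp only [map_smul]; exact Submodule.smul_mem _ c hx
  have hll : ∀ s, ∀ x ∈ Submodule.span ℝ (Set.range (A s)), ∀ j, ω x (A s j) = 0 := by
    intro s x hx j
    induction hx using Submodule.span_induction with
    | mem x hx => obtain ⟨i, rfl⟩ := hx; exact hLag s i j
    | zero => simp
    | add x y _ _ h1 h2 => simp [h1, h2]
    | smul c x _ h1 => simp [h1]
  have hlW : ∀ x ∈ Submodule.span ℝ (Set.range (A t)), ∀ j, Wb t x (A t j) = ω x (A' t j) := by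
    intro x hx j
    induction hx using Submodule.span_induction with
    | mem x hx => obtain ⟨i, rfl⟩ := hx; exact hWb t i j
    | zero => simp
    | add x y _ _ h1 h2 => simp [h1, h2]
    | smul c x _ h1 => simp [h1]
  have hlF : ∀ s, ∀ x ∈ Submodule.span ℝ (Set.range (A s)), F s x = 0 := by
    intro s x hx
    induction hx using Submodule.span_induction with
    | mem x hx => obtain ⟨i, rfl⟩ := hx; exact hF0 s i
    | zero => simp
    | add x y _ _ h1 h2 => simp [h1, h2]
    | smul c x _ h1 => simp [h1]
  have hsk : ∀ s x y, ω (F s x) y + ω x (F s y) = 0 := by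
    intro s x y
    refine oh_ind (hsp s) (fun x => ω (F s x) y + ω x (F s y) = 0) ?_ ?_ ?_ ?_ ?_ x
    · intro i
      rw [hsw (A s i), hll s _ (hFl s y) i, hF0]; simp
    · intro i
      refine oh_ind (hsp s) (fun y => ω (F s (A' s i)) y + ω (A' s i) (F s y) = 0) ?_ ?_ ?_ ?_ ?_ y
      · intro j; simp [hF0, hF1, hLag]
      · intro j; simp only [hF1]; have := hW s i j; linarith
      · simp
      · intro x y hx hy; simp only [map_add]; linarith
      · intro c x hx; simp only [map_smul, smul_eq_mul]; linear_combination c * hx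
    · simp
    · intro x y hx hy; simp only [map_add, LinearMap.add_apply]; linarith
    · intro c x hx
      simp only [map_smul, LinearMap.smul_apply, smul_eq_mul]; linear_combination c * hx
  have dF : ∀ s x, HasDerivAt (fun r => F r x) (F' s x) s := fun s x => by
    simpa using (hFd s).clm_apply (hasDerivAt_const s x)
  have dF' : ∀ s x, HasDerivAt (fun r => F' r x) (F'' s x) s := fun s x => by
    simpa using (hFd' s).clm_apply (hasDerivAt_const s x)
  have hsk' : ∀ s x y, ω (F' s x) y + ω x (F' s y) = 0 := by
    intro s x y
    have := oh_const ((oh_bilin ω (dF s x) (hasDerivAt_const s y)).add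
      (oh_bilin ω (hasDerivAt_const s x) (dF s y))) (fun r => hsk r x y)
    simpa using this
  have hsk'' : ∀ x y, ω (F'' t x) y + ω x (F'' t y) = 0 := by
    intro x y
    have := oh_const ((oh_bilin ω (dF' t x) (hasDerivAt_const t y)).add
      (oh_bilin ω (hasDerivAt_const t x) (dF' t y))) (fun r => hsk' r x y)
    simpa using this
  have f1 : ∀ s i, F' s (A s i) = - A s i := by
    intro s i
    have := oh_const ((hFd s).clm_apply (h1 i s)) (fun r => hF0 r i)
    rw [hF1] at this
    exact eq_neg_of_add_eq_zero_left this
  have f2 : ∀ s i, F' s (A' s i) = A' s i - F s (A2 s i) := by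
    intro s i
    have := oh_const (((hFd s).clm_apply (h2 i s)).sub (h1 i s)) (c := 0)
      (fun r => by simp [hF1])
    rw [sub_eq_zero] at this
    exact eq_sub_of_add_eq this
  have f3 : ∀ i, F'' t (A t i) = F t (A2 t i) - (2 : ℝ) • A' t i := by
    intro i
    have := oh_const (((hFd' t).clm_apply (h1 i t)).add (h1 i t)) (c := 0)
      (fun r => by simp [f1])
    rw [f2] at this
    rw [two_smul, ← sub_eq_zero, ← this]; abel
  have f4 : ∀ i, F'' t (A' t i) = A2 t i - (2 : ℝ) • F' t (A2 t i) - F t (A3 t i) := by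
    intro i
    have := oh_const (((hFd' t).clm_apply (h2 i t)).sub
      ((h2 i t).sub ((hFd t).clm_apply (h3 i t)))) (c := 0)
      (fun r => by simp [f2])
    rw [two_smul, ← sub_eq_zero, ← this]; abel
  have hFF : ∀ s x, F s (F s x) = 0 := fun s x => hlF s _ (hFl s x)
  have hFF1 : ∀ s x, F' s (F s x) + F s (F' s x) = 0 := fun s x =>
    oh_const ((hFd s).clm_apply (dF s x)) (fun r => hFF r x)
  have hFF2 : ∀ x, F'' t (F t x) + (2 : ℝ) • F' t (F' t x) + F t (F'' t x) = 0 := by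
    intro x
    have := oh_const (((hFd' t).clm_apply (dF t x)).add ((hFd t).clm_apply (dF' t x)))
      (fun r => hFF1 r x)
    rw [two_smul, ← this]; abel
  have hl1 : ∀ x ∈ Submodule.span ℝ (Set.range (A t)), F' t x = - x := by
    intro x hx
    induction hx using Submodule.span_induction with
    | mem x hx => obtain ⟨i, rfl⟩ := hx; exact f1 t i
    | zero => simp
    | add x y _ _ h1 h2 => simp only [map_add, h1, h2]; abel
    | smul c x _ h1 => simp [h1]
  have hinv : ∀ x, F' t (F' t x) = x := by
    refine oh_ind (hsp t) (fun x => F' t (F' t x) = x) ?_ ?_ ?_ ?_ ?_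
    · intro i; simp [f1]
    · intro i; rw [f2, map_sub, f2, hl1 _ (hFl t _)]; abel
    · simp
    · intro x y hx hy; simp [hx, hy]
    · intro c x hx; simp [hx]
  have hver : ∀ x, x - F' t x ∈ Submodule.span ℝ (Set.range (A t)) := by
    refine oh_ind (hsp t) (fun x => x - F' t x ∈ Submodule.span ℝ (Set.range (A t))) ?_ ?_ ?_ ?_ ?_
    · intro i
      have : A t i ∈ Submodule.span ℝ (Set.range (A t)) := Submodule.subset_span ⟨i, rfl⟩
      simp only [f1, sub_neg_eq_add]; exact Submodule.add_mem _ this this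
    · intro i; simp only [f2, sub_sub_cancel]; exact hFl t _
    · simp
    · intro x y hx hy
      have := Submodule.add_mem _ hx hy
      convert this using 1
      simp only [map_add]; abel
    · intro c x hx
      have := Submodule.smul_mem _ c hx
      convert this using 1
      simp [smul_sub]
  refine ⟨fun x y => by linarith [hsk t x y], hFl t, ?_, f2 t, ?_⟩
  · intro x y
    refine oh_ind (hsp t) (fun y => Wb t (F t x) (F t y) = ω (F t x) y) ?_ ?_ ?_ ?_ ?_ y
    · intro j; simp [hF0, hll t _ (hFl t x)]
    · intro j; simp only [hF1]; exact hlW _ (hFl t x) j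
    · simp
    · intro x y hx hy; simp only [map_add, hx, hy]
    · intro c x hx; simp only [map_smul, hx]
  · intro c
    set a := ∑ i, c i • A t i with ha
    set a1 := ∑ i, c i • A' t i with ha1
    set a2 := ∑ i, c i • A2 t i with ha2
    set a3 := ∑ i, c i • A3 t i with ha3
    have g0 : F t a1 = a := by simp [ha, ha1, hF1]
    have g2 : F' t a1 = a1 - F t a2 := by
      simp [ha1, ha2, f2, smul_sub, Finset.sum_sub_distrib]
    have g3 : F'' t a = F t a2 - (2 : ℝ) • a1 := by
      simp only [ha, ha1, ha2, f3, smul_sub, Finset.sum_sub_distrib, map_sum, map_smul,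
        Finset.smul_sum]
      simp only [smul_comm (2 : ℝ)]
    have g4 : F'' t a1 = a2 - (2 : ℝ) • F' t a2 - F t a3 := by
      simp only [ha1, ha2, ha3, f4, smul_sub, Finset.sum_sub_distrib, map_sum, map_smul,
        Finset.smul_sum]
      simp only [smul_comm (2 : ℝ)]
    have hK : F'' t (F'' t a) ∈ Submodule.span ℝ (Set.range (A t)) := by
      have e : F'' t (F'' t a) = (-4 : ℝ) • (a2 - F' t a2) + F t ((2 : ℝ) • a3 - F'' t a2) := by
        have := hFF2 a2
        rw [hinv] at this
        rw [g3, map_sub, map_smul, g4, map_sub, map_smul]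
        have e2 : F'' t (F t a2) = - ((2 : ℝ) • a2) - F t (F'' t a2) := by
          rw [← sub_eq_zero, ← this]; abel
        rw [e2]; module
      rw [e]
      exact Submodule.add_mem _ (Submodule.smul_mem _ _ (hver _)) (hFl t _)
    have hWa : Wb t (F'' t (F'' t a)) a = ω (F'' t (F'' t a)) a1 := by
      conv_lhs => rw [ha, map_sum]
      conv_rhs => rw [ha1, map_sum]
      refine Finset.sum_congr rfl fun i _ => ?_
      rw [map_smul, map_smul, hlW _ hK i]
    have k1 := hsk'' (F'' t a) a1
    have k2 : ω (F'' t a) (F'' t a1) = ω (F t a2 - (2 : ℝ) • a1) (a2 - (2 : ℝ) • F' t a2 - F t a3) := by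
      rw [g3, g4]
    simp only [map_sub, map_smul, LinearMap.sub_apply, LinearMap.smul_apply, smul_eq_mul] at k2
    have k3 := hsk' t a1 a2
    rw [g2, map_sub, LinearMap.sub_apply] at k3
    have k4 := hsk t a1 a3
    rw [g0] at k4
    have k5 := hsk t (F t a2) a3
    rw [hFF, map_zero, LinearMap.zero_apply, zero_add] at k5
    have k6 := hsk' t (F t a2) a2
    rw [hl1 _ (hFl t a2), map_neg, LinearMap.neg_apply] at k6
    rw [map_smul, LinearMap.smul_apply, hWa, smul_eq_mul]
    linarith

end OneillHelpers


/-- The symplectic orthogonal `S^ω = {u : ω(u, s) = 0 for all s ∈ S}` of a subspace. -/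
def sympOrtho {V : Type*} [AddCommGroup V] [Module ℝ V]
    (ω : V →ₗ[ℝ] V →ₗ[ℝ] ℝ) (S : Submodule ℝ V) : Submodule ℝ V where
  carrier := {u | ∀ s ∈ S, ω u s = 0}
  add_mem' := fun ha hb s hs => by
    simp only [map_add, LinearMap.add_apply, ha s hs, hb s hs, add_zero]
  zero_mem' := fun s hs => by simp
  smul_mem' := fun c a ha s hs => by
    simp only [map_smul, LinearMap.smul_apply, ha s hs, smul_zero]

/-- **Theorem 4.6 (O'Neill formula for symplectic reductions of fanning curves).**
In the reduction setting, let `𝐀(t) : ℓ(t) → ℓ(t)` be the O'Neill endomorphism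
(`𝐀(t)a_j = P_𝔳(t)ȧ_j` for `j ≤ k`, `𝐀(t)a_j = −P_𝔥(t)ȧ_j` for `j > k`), `K(t)` the
Jacobi endomorphism of `A`, and `K_R(t)`, `W_R(t)` the Jacobi endomorphism and Wronskian
of the reduced frame `Ā = (π∘a_1, …, π∘a_k)` in `(𝕎/𝕎^ω, ω_R)`.  Then for every `t` and
every `u ∈ 𝔥(t) = ℓ(t) ∩ 𝕎`:
`W_R(t)(K_R(t)π(u), π(u)) = W(t)(K(t)u, u) + 3·W(t)(𝐀(t)u, 𝐀(t)u)`. -/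
theorem oneill_formula_symplectic_reduction
    {V : Type*} [NormedAddCommGroup V] [NormedSpace ℝ V] [FiniteDimensional ℝ V]
    {n : ℕ} (hn : 0 < n) (hdim : Module.finrank ℝ V = 2 * n)
    (ω : V →ₗ[ℝ] V →ₗ[ℝ] ℝ)
    (halt : ∀ v, ω v v = 0)
    (hnd : ∀ v, (∀ w, ω v w = 0) → v = 0)
    (A A' : ℝ → Fin n → V)
    (hA : ∀ i, ContDiff ℝ (⊤ : ℕ∞) (fun t => A t i))
    (hA' : ∀ i t, HasDerivAt (fun s => A s i) (A' t i) t)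
    (hfan : ∀ t, LinearIndependent ℝ (Sum.elim (A t) (A' t)) ∧
      Submodule.span ℝ (Set.range (Sum.elim (A t) (A' t))) = ⊤)
    (hLag : ∀ t i j, ω (A t i) (A t j) = 0)
    -- the fundamental endomorphism of `A` and its derivatives
    (F F' F'' : ℝ → V →L[ℝ] V)
    (hF0 : ∀ t i, F t (A t i) = 0)
    (hF1 : ∀ t i, F t (A' t i) = A t i)
    (hFd : ∀ t, HasDerivAt F (F' t) t)
    (hFd' : ∀ t, HasDerivAt F' (F'' t) t)
    -- the horizontal frame
    (H : ℝ → Fin n → V)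
    (hH : ∀ t j, H t j = (1/2 : ℝ) • (A' t j + F' t (A' t j)))
    -- the reduction setting
    (Wsub : Submodule ℝ V)
    (hco : sympOrtho ω Wsub ≤ Wsub)
    (k : ℕ) (hkn : k ≤ n)
    (hk : k + Module.finrank ℝ (sympOrtho ω Wsub) = n)
    (hmem : ∀ t (i : Fin n), (i : ℕ) < k → A t i ∈ Wsub)
    (hmem' : ∀ t (i : Fin n), (i : ℕ) < k → A' t i ∈ Wsub)
    (hspan : ∀ t, Submodule.span ℝ {v | ∃ i : Fin n, (i : ℕ) < k ∧ v = A t i} =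
      Submodule.span ℝ (Set.range (A t)) ⊓ Wsub)
    (hblock : ∀ t (i j : Fin n), (i : ℕ) < k → k ≤ (j : ℕ) → ω (A t i) (A' t j) = 0)
    (hWkinv : ∀ t, IsUnit (Matrix.of fun i j : Fin k =>
      ω (A t (Fin.castLE hkn i)) (A' t (Fin.castLE hkn j))))
    -- a model of the symplectic reduction `(𝕎/𝕎^ω, ω_R)` with quotient map `π`
    {Qv : Type*} [NormedAddCommGroup Qv] [NormedSpace ℝ Qv] [FiniteDimensional ℝ Qv]
    (π : Wsub →ₗ[ℝ] Qv) (hπsurj : Function.Surjective π)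
    (hπker : LinearMap.ker π = (sympOrtho ω Wsub).comap Wsub.subtype)
    (ωR : Qv →ₗ[ℝ] Qv →ₗ[ℝ] ℝ)
    (hωR : ∀ u v : Wsub, ωR (π u) (π v) = ω u v)
    -- the fundamental endomorphism of the reduced frame `Ā` and its derivatives
    (FR FR' FR'' : ℝ → Qv →L[ℝ] Qv)
    (hFR0 : ∀ t (i : Fin k), FR t (π ⟨A t (Fin.castLE hkn i),
      hmem t (Fin.castLE hkn i) i.isLt⟩) = 0)
    (hFR1 : ∀ t (i : Fin k), FR t (π ⟨A' t (Fin.castLE hkn i),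
        hmem' t (Fin.castLE hkn i) i.isLt⟩) =
      π ⟨A t (Fin.castLE hkn i), hmem t (Fin.castLE hkn i) i.isLt⟩)
    (hFRd : ∀ t, HasDerivAt FR (FR' t) t)
    (hFRd' : ∀ t, HasDerivAt FR' (FR'' t) t)
    -- the projections onto `𝔥(t)` and `𝔳(t)` relative to `V = 𝔥(t) ⊕ 𝔳(t) ⊕ h(t)`
    (Ph Pv : ℝ → V →ₗ[ℝ] V)
    (hPh1 : ∀ t (j : Fin n), (j : ℕ) < k → Ph t (A t j) = A t j)
    (hPh2 : ∀ t (j : Fin n), k ≤ (j : ℕ) → Ph t (A t j) = 0)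
    (hPh3 : ∀ t j, Ph t (H t j) = 0)
    (hPv1 : ∀ t (j : Fin n), (j : ℕ) < k → Pv t (A t j) = 0)
    (hPv2 : ∀ t (j : Fin n), k ≤ (j : ℕ) → Pv t (A t j) = A t j)
    (hPv3 : ∀ t j, Pv t (H t j) = 0)
    -- the O'Neill endomorphism `𝐀(t)`
    (On : ℝ → V →ₗ[ℝ] V)
    (hOn1 : ∀ t (j : Fin n), (j : ℕ) < k → On t (A t j) = Pv t (A' t j))
    (hOn2 : ∀ t (j : Fin n), k ≤ (j : ℕ) → On t (A t j) = -(Ph t (A' t j)))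
    -- the Wronskian bilinear forms of `ℓ(t)` and of the reduced curve
    (Wb : ℝ → V →ₗ[ℝ] V →ₗ[ℝ] ℝ)
    (hWb : ∀ t i j, Wb t (A t i) (A t j) = ω (A t i) (A' t j))
    (WbR : ℝ → Qv →ₗ[ℝ] Qv →ₗ[ℝ] ℝ)
    (hWbR : ∀ t (i j : Fin k),
      WbR t (π ⟨A t (Fin.castLE hkn i), hmem t (Fin.castLE hkn i) i.isLt⟩)
        (π ⟨A t (Fin.castLE hkn j), hmem t (Fin.castLE hkn j) j.isLt⟩) =
      ωR (π ⟨A t (Fin.castLE hkn i), hmem t (Fin.castLE hkn i) i.isLt⟩)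
        (π ⟨A' t (Fin.castLE hkn j), hmem' t (Fin.castLE hkn j) j.isLt⟩)) :
    -- the O'Neill formula
    ∀ t (u : V),
      u ∈ Submodule.span ℝ {v | ∃ i : Fin n, (i : ℕ) < k ∧ v = A t i} →
      ∀ (huW : u ∈ Wsub),
        WbR t ((1/4 : ℝ) • FR'' t (FR'' t (π ⟨u, huW⟩))) (π ⟨u, huW⟩) =
          Wb t ((1/4 : ℝ) • F'' t (F'' t u)) u +
            3 * Wb t (On t u) (On t u) := by
  intro t u hu huW
  have hsw : ∀ x y, ω x y = - ω y x := by
    intro x y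
    have := halt (x + y)
    simp only [map_add, LinearMap.add_apply, halt] at this
    linarith
  -- higher derivatives
  have hAd : ∀ i, (fun t => A' t i) = deriv (fun t => A t i) := fun i =>
    funext fun t => (hA' i t).deriv.symm
  have hsm1 : ∀ i, ContDiff ℝ (⊤ : ℕ∞) (fun t => A' t i) := fun i => by
    rw [hAd]; exact (hA i).iterate_deriv 1
  obtain ⟨A2, hA2⟩ : ∃ A2 : ℝ → Fin n → V, ∀ i t, HasDerivAt (fun s => A' s i) (A2 t i) t :=
    ⟨fun t i => deriv (fun s => A' s i) t, fun i t =>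
      ((hsm1 i).differentiable (by simp)).differentiableAt.hasDerivAt⟩
  have hA2d : ∀ i, (fun t => A2 t i) = deriv (fun t => A' t i) := fun i =>
    funext fun t => (hA2 i t).deriv.symm
  have hsm2 : ∀ i, ContDiff ℝ (⊤ : ℕ∞) (fun t => A2 t i) := fun i => by
    rw [hA2d]; exact (hsm1 i).iterate_deriv 1
  obtain ⟨A3, hA3⟩ : ∃ A3 : ℝ → Fin n → V, ∀ i t, HasDerivAt (fun s => A2 s i) (A3 t i) t :=
    ⟨fun t i => deriv (fun s => A2 s i) t, fun i t =>
      ((hsm2 i).differentiable (by simp)).differentiableAt.hasDerivAt⟩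
  -- extension of the quotient map
  obtain ⟨r, hr⟩ := Wsub.subtype.exists_leftInverse_of_injective (Submodule.ker_subtype _)
  have hr' : ∀ x : Wsub, r (x : V) = x := fun x => by
    simpa using LinearMap.congr_fun hr x
  let q : V →L[ℝ] V := LinearMap.toContinuousLinearMap (Wsub.subtype ∘ₗ r)
  have hqmem : ∀ x, q x ∈ Wsub := fun x => (r x).2
  have hq : ∀ x ∈ Wsub, q x = x := fun x hx => by
    have := hr' ⟨x, hx⟩
    change ((r x : Wsub) : V) = x
    rw [this]
  have hder : ∀ (f : ℝ → V) (f' : V) (s : ℝ), HasDerivAt f f' s → (∀ s, f s ∈ Wsub) →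
      f' ∈ Wsub := by
    intro f f' s hf hm
    have h1 := q.hasFDerivAt.comp_hasDerivAt s hf
    have h2 : q ∘ f = f := funext fun s => hq _ (hm s)
    rw [h2] at h1
    rw [hf.unique h1]
    exact hqmem _
  have hm2 : ∀ t (i : Fin n), (i : ℕ) < k → A2 t i ∈ Wsub := fun t i hi =>
    hder _ _ t (hA2 i t) (fun s => hmem' s i hi)
  have hm3 : ∀ t (i : Fin n), (i : ℕ) < k → A3 t i ∈ Wsub := fun t i hi =>
    hder _ _ t (hA3 i t) (fun s => hm2 s i hi)
  let p : V →L[ℝ] Qv := LinearMap.toContinuousLinearMap (π ∘ₗ r)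
  have hp : ∀ x (hx : x ∈ Wsub), π ⟨x, hx⟩ = p x := fun x hx => by
    change _ = π (r x)
    rw [hr' ⟨x, hx⟩]
  have hωp : ∀ x ∈ Wsub, ∀ y ∈ Wsub, ωR (p x) (p y) = ω x y := fun x hx y hy => by
    rw [← hp x hx, ← hp y hy, hωR]
  have hpd : ∀ (f : ℝ → V) (f' : V) (s : ℝ), HasDerivAt f f' s →
      HasDerivAt (fun s => p (f s)) (p f') s := fun f f' s hf =>
    p.hasFDerivAt.comp_hasDerivAt s hf
  simp only [hp] at hFR0 hFR1 hWbR ⊢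
  let e : Fin k → Fin n := Fin.castLE hkn
  have he : ∀ i : Fin k, (e i : ℕ) < k := fun i => i.isLt
  have haltR : ∀ v, ωR v v = 0 := by
    intro v
    obtain ⟨x, rfl⟩ := hπsurj v
    rw [hωR, halt]
  -- the dimension of the reduction
  have hdimQ : Module.finrank ℝ Qv = k + k := by
    have d1 : Module.finrank ℝ (sympOrtho ω Wsub) = 2 * n - Module.finrank ℝ Wsub := by
      have hN : LinearMap.BilinForm.Nondegenerate (ω : LinearMap.BilinForm ℝ V) :=
        ⟨fun x hx => hnd x hx, fun x hx => hnd x fun w => by rw [hsw, hx, neg_zero]⟩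
      have := LinearMap.BilinForm.finrank_orthogonal hN Wsub
      rw [hdim] at this
      rw [← this]
      have : sympOrtho ω Wsub = LinearMap.BilinForm.orthogonal ω Wsub := by
        ext x
        rw [LinearMap.BilinForm.mem_orthogonal_iff]
        constructor
        · intro h y hy; rw [hsw, h y hy, neg_zero]
        · intro h y hy; rw [hsw, h y hy, neg_zero]
      rw [this]
    have d2 := LinearMap.finrank_range_add_finrank_ker π
    rw [LinearMap.range_eq_top.2 hπsurj, finrank_top, hπker,
      (Submodule.comapSubtypeEquivOfLe hco).finrank_eq] at d2
    have d3 := Submodule.finrank_le Wsub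
    omega
  have hWu : ∀ s (c : Fin k → ℝ), (∀ j, ∑ i, c i * ω (A s (e i)) (A' s (e j)) = 0) → c = 0 := by
    intro s c hc
    apply Matrix.vecMul_injective_of_isUnit (hWkinv s)
    funext j
    simpa [Matrix.vecMul, dotProduct] using hc j
  have hWu' : ∀ s (c : Fin k → ℝ), (∀ j, ∑ i, c i * ω (A s (e j)) (A' s (e i)) = 0) → c = 0 := by
    intro s c hc
    apply Matrix.mulVec_injective_of_isUnit (hWkinv s)
    funext j
    simpa [Matrix.mulVec, dotProduct, mul_comm] using hc j
  have hmA : ∀ s i, A s (e i) ∈ Wsub := fun s i => hmem s _ (he i)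
  have hmA' : ∀ s i, A' s (e i) ∈ Wsub := fun s i => hmem' s _ (he i)
  have hspR : ∀ s, Submodule.span ℝ (Set.range (Sum.elim (fun i : Fin k => p (A s (e i)))
      (fun i : Fin k => p (A' s (e i))))) = ⊤ := by
    intro s
    apply LinearIndependent.span_eq_top_of_card_eq_finrank'
    · rw [Fintype.linearIndependent_iff]
      intro g hg
      rw [Fintype.sum_sum_type] at hg
      simp only [Sum.elim_inl, Sum.elim_inr] at hg
      have hb : (fun i => g (Sum.inr i)) = 0 := by
        apply hWu' s
        intro j
        have := congrArg (ωR (p (A s (e j)))) hg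
        simpa [hωp _ (hmA s j) _ (hmA s _), hωp _ (hmA s j) _ (hmA' s _), hLag] using this
      have hb' : ∀ i, g (Sum.inr i) = 0 := fun i => congrFun hb i
      have ha : (fun i => g (Sum.inl i)) = 0 := by
        apply hWu s
        intro j
        have := congrArg (fun x => ωR x (p (A' s (e j)))) hg
        simpa [hb', hωp _ (hmA s _) _ (hmA' s j)] using this
      rintro (i | i)
      · exact congrFun ha i
      · exact hb' i
    · simp [hdimQ]
  -- apply the general lemma twice
  obtain ⟨gsk, gl, gW, gH, gK⟩ := oh_general ω halt A A' A2 A3 hA' hA2 hA3 (fun t => (hfan t).2)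
    hLag F F' F'' hF0 hF1 hFd hFd' Wb hWb t
  obtain ⟨-, -, -, -, rK⟩ := oh_general ωR haltR (fun s i => p (A s (e i)))
    (fun s i => p (A' s (e i))) (fun s i => p (A2 s (e i))) (fun s i => p (A3 s (e i)))
    (fun i s => hpd _ _ s (hA' _ s)) (fun i s => hpd _ _ s (hA2 _ s))
    (fun i s => hpd _ _ s (hA3 _ s)) hspR
    (fun s i j => by rw [hωp _ (hmA s i) _ (hmA s j), hLag])
    FR FR' FR'' hFR0 hFR1 hFRd hFRd' WbR hWbR t
  -- coefficients
  have hset : {v | ∃ i : Fin n, (i : ℕ) < k ∧ v = A t i} = Set.range (fun i => A t (e i)) := by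
    ext v
    constructor
    · rintro ⟨i, hi, rfl⟩; exact ⟨⟨i, hi⟩, rfl⟩
    · rintro ⟨i, rfl⟩; exact ⟨e i, he i, rfl⟩
  rw [hset, Submodule.mem_span_range_iff_exists_fun] at hu
  obtain ⟨c, rfl⟩ := hu
  let C : Fin n → ℝ := fun i => if h : (i : ℕ) < k then c ⟨i, h⟩ else 0
  have hC : ∀ i, C (e i) = c i := fun i => by simp [C, e]
  have hCs : ∀ x : Fin n → V, ∑ i, C i • x i = ∑ i, c i • x (e i) := by
    intro x
    symm
    apply Finset.sum_of_injOn e (fun a _ b _ h => Fin.castLE_injective hkn h) (by simp)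
    · intro i _ hi
      have : ¬ (i : ℕ) < k := fun h => hi ⟨⟨i, h⟩, by simp, rfl⟩
      simp [C, this]
    · intro i _; rw [hC]
  have gK := gK C
  rw [hCs, hCs, hCs, hCs] at gK
  have rK := rK c
  simp only [← map_smul, ← map_sum] at rK
  simp only [map_smul] at rK gK ⊢
  rw [gK, rK]
  set a := ∑ i, c i • A t (e i) with ha
  set a1 := ∑ i, c i • A' t (e i) with ha1
  set a2 := ∑ i, c i • A2 t (e i) with ha2
  set a3 := ∑ i, c i • A3 t (e i) with ha3
  have ma1 : a1 ∈ Wsub := Submodule.sum_mem _ fun i _ => Submodule.smul_mem _ _ (hmA' t i)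
  have ma2 : a2 ∈ Wsub := Submodule.sum_mem _ fun i _ => Submodule.smul_mem _ _ (hm2 t _ (he i))
  have ma3 : a3 ∈ Wsub := Submodule.sum_mem _ fun i _ => Submodule.smul_mem _ _ (hm3 t _ (he i))
  rw [hωp _ ma1 _ ma2, hωp _ huW _ ma3]
  -- O'Neill endomorphism on `a`
  have hOn : On t a = (1/2 : ℝ) • Pv t (F t a2) := by
    rw [ha, ha2]
    simp only [map_sum, map_smul, Finset.smul_sum]
    refine Finset.sum_congr rfl fun i _ => ?_
    rw [hOn1 t _ (he i), smul_comm]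
    congr 1
    have h1 : A' t (e i) = H t (e i) + (1/2 : ℝ) • F t (A2 t (e i)) := by
      rw [hH, gH]; module
    rw [h1, map_add, hPv3, map_smul, zero_add]
  -- splitting of `a2`
  obtain ⟨g, hg⟩ := (Submodule.mem_span_range_iff_exists_fun ℝ).1
    (show p a2 ∈ Submodule.span ℝ _ by rw [hspR t]; trivial)
  rw [Fintype.sum_sum_type] at hg
  simp only [Sum.elim_inl, Sum.elim_inr, ← map_smul, ← map_sum, ← map_add] at hg
  set s0 := ∑ i, g (Sum.inl i) • A t (e i) with hs0
  set s1 := ∑ i, g (Sum.inr i) • A' t (e i) with hs1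
  set b := ∑ i, g (Sum.inr i) • A t (e i) with hb
  have ms0 : s0 ∈ Wsub := Submodule.sum_mem _ fun i _ => Submodule.smul_mem _ _ (hmA t i)
  have ms1 : s1 ∈ Wsub := Submodule.sum_mem _ fun i _ => Submodule.smul_mem _ _ (hmA' t i)
  have mb : b ∈ Wsub := Submodule.sum_mem _ fun i _ => Submodule.smul_mem _ _ (hmA t i)
  have ms : s0 + s1 ∈ Wsub := Submodule.add_mem _ ms0 ms1
  have hFs : F t (s0 + s1) = b := by simp [hs0, hs1, hb, hF0, hF1]
  have hFRs : FR t (p (s0 + s1)) = p b := by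
    simp only [hs0, hs1, hb, map_add, map_sum, map_smul]
    have i0 : ∀ i, FR t (p (A t (e i))) = 0 := fun i => hFR0 t i
    have i1 : ∀ i, FR t (p (A' t (e i))) = p (A t (e i)) := fun i => hFR1 t i
    simp [i0, i1]
  obtain ⟨w, hw⟩ : ∃ w, w = a2 - (s0 + s1) := ⟨_, rfl⟩
  have hwW : w ∈ Wsub := hw ▸ Submodule.sub_mem _ ma2 ms
  have hwo : w ∈ sympOrtho ω Wsub := by
    have : (⟨w, hwW⟩ : Wsub) ∈ LinearMap.ker π := by
      rw [LinearMap.mem_ker, hp, hw, map_sub, hg, sub_self]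
    rw [hπker] at this
    exact this
  have hw0 : ∀ y ∈ Wsub, ω w y = 0 := hwo
  have ha2w : a2 = (s0 + s1) + w := by rw [hw]; abel
  -- `F w` is vertical
  have hPvb : Pv t b = 0 := by
    have : ∀ i, Pv t (A t (e i)) = 0 := fun i => hPv1 t _ (he i)
    simp [hb, this]
  have hPvw : Pv t (F t w) = F t w := by
    obtain ⟨d, hd⟩ := (Submodule.mem_span_range_iff_exists_fun ℝ).1 (gl w)
    have hd0 : (fun i => d (e i)) = 0 := by
      apply hWu t
      intro j
      have h1 : ω (F t w) (A' t (e j)) = 0 := by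
        rw [gsk, hF1, hw0 _ (hmA t j), neg_zero]
      rw [← hd] at h1
      simp only [map_sum, map_smul, LinearMap.sum_apply, LinearMap.smul_apply, smul_eq_mul] at h1
      rw [← h1]
      apply Finset.sum_of_injOn e (fun a _ b _ h => Fin.castLE_injective hkn h) (by simp)
      · intro i _ hi
        have h2 : ¬ (i : ℕ) < k := fun h => hi ⟨⟨i, h⟩, by simp, rfl⟩
        have h3 : ω (A t i) (A' t (e j)) = 0 := by
          have := hF1 t i
          rw [← hF1 t i, gsk, hF1, hsw, hblock t _ _ (he j) (not_lt.1 h2)]; simp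
        rw [h3, mul_zero]
      · intro i _; rfl
    rw [← hd, map_sum]
    refine Finset.sum_congr rfl fun i _ => ?_
    rw [map_smul]
    by_cases hi : (i : ℕ) < k
    · have : d i = 0 := congrFun hd0 ⟨i, hi⟩
      simp [this]
    · rw [hPv2 t i (not_lt.1 hi)]
  have hOn' : On t a = (1/2 : ℝ) • F t w := by
    rw [hOn, ha2w, map_add, map_add, hFs, hPvb, hPvw, zero_add]
  have e1 : Wb t (On t a) (On t a) = 1/4 * ω (F t w) w := by
    rw [hOn']
    simp only [map_smul, LinearMap.smul_apply, smul_eq_mul, gW]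
    ring
  have e2 : ωR (FR t (p a2)) (p a2) = ω b (s0 + s1) := by
    rw [← hg, hFRs, hωp _ mb _ ms]
  have e3 : ω (F t a2) a2 = ω b (s0 + s1) + ω (F t w) w := by
    have h1 : ω b w = 0 := by rw [hsw, hw0 _ mb, neg_zero]
    have h2 : ω (F t w) (s0 + s1) = 0 := by rw [gsk, hFs, hw0 _ mb, neg_zero]
    rw [ha2w, map_add (F t), hFs]
    simp only [map_add, LinearMap.add_apply] at h2 ⊢
    linarith
  rw [e1, e2, e3]
  ring
end

section
/- Proposition 2.8, first part: Let A be a fanning frame with fundamental endomorphism F(t), horizontal frame H_i(t) = P_h(t)ȧ_i(t), and Schwarzian {A,t}. Then for all t and all j: (1/2)F̈(t)a_j(t) = −H_j(t) and (1/2)F̈(t)H_j(t) = −(1/2)Σ_i a_i(t)·{A,t}_{ij}. Equivalently, in the basis (a_1(t),…,a_n(t),H_1(t),…,H_n(t)) of V the matrix of (1/2)F̈(t) is the block matrix [[O, −(1/2){A,t}],[−I, O]]. -/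
/-- **Proposition 2.8, first part.**  For a fanning frame `A` in a `2n`-dimensional real
vector space `V`, with fundamental endomorphism `F(t)` (given together with its first and
second derivatives `F'`, `F''`), horizontal frame `H_j(t) = P_h(t) ȧ_j(t)` and Schwarzian
`{A,t} = 2Q − (1/2)P² − Ṗ`, one has, for all `t` and `j`:
`(1/2) F̈(t) a_j(t) = − H_j(t)` and `(1/2) F̈(t) H_j(t) = −(1/2) Σ_i a_i(t) {A,t}_{ij}`. -/
theorem prop2_8_first_part
    {V : Type*} [NormedAddCommGroup V] [NormedSpace ℝ V] [FiniteDimensional ℝ V]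
    {n : ℕ} (hn : 0 < n) (hdim : Module.finrank ℝ V = 2 * n)
    (A A' A'' : ℝ → Fin n → V)
    (hA : ∀ i, ContDiff ℝ (⊤ : ℕ∞) (fun t => A t i))
    (hA' : ∀ i t, HasDerivAt (fun s => A s i) (A' t i) t)
    (hA'' : ∀ i t, HasDerivAt (fun s => A' s i) (A'' t i) t)
    (hfan : ∀ t, LinearIndependent ℝ (Sum.elim (A t) (A' t)) ∧
      Submodule.span ℝ (Set.range (Sum.elim (A t) (A' t))) = ⊤)
    (F F' F'' : ℝ → V →L[ℝ] V)
    (hF0 : ∀ t i, F t (A t i) = 0)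
    (hF1 : ∀ t i, F t (A' t i) = A t i)
    (hFd : ∀ t, HasDerivAt F (F' t) t)
    (hFd' : ∀ t, HasDerivAt F' (F'' t) t)
    (P Q P' : ℝ → Matrix (Fin n) (Fin n) ℝ)
    (hPQ : ∀ t j, A'' t j + ∑ i, P t i j • A' t i + ∑ i, Q t i j • A t i = 0)
    (hPd : ∀ i j t, HasDerivAt (fun s => P s i j) (P' t i j) t)
    (Sch : ℝ → Matrix (Fin n) (Fin n) ℝ)
    (hSch : ∀ t, Sch t = (2 : ℝ) • Q t - (1/2 : ℝ) • (P t * P t) - P' t) :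
    ∀ t j,
      (1/2 : ℝ) • F'' t (A t j) = -((1/2 : ℝ) • (A' t j + F' t (A' t j))) ∧
      (1/2 : ℝ) • F'' t ((1/2 : ℝ) • (A' t j + F' t (A' t j))) =
        -((1/2 : ℝ) • ∑ i, Sch t i j • A t i) := by
  have e1 : ∀ t j, F' t (A t j) = -A t j := by
    intro t j
    have h := (hFd t).clm_apply (hA' j t)
    simp only [hF0, hF1] at h
    have h2 := h.unique (hasDerivAt_const t (0 : V))
    exact eq_neg_of_add_eq_zero_left h2
  have eA : ∀ t j, A'' t j = -(∑ i, P t i j • A' t i) - ∑ i, Q t i j • A t i := by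
    intro t j
    rw [← sub_eq_zero, ← hPQ t j]
    abel
  have e2 : ∀ t j, F' t (A' t j) = A' t j + ∑ i, P t i j • A t i := by
    intro t j
    have h := (hFd t).clm_apply (hA'' j t)
    simp only [hF1] at h
    have h2 := h.unique (hA' j t)
    rw [eA] at h2
    simp only [map_sub, map_neg, map_sum, map_smul, hF0, hF1, smul_zero,
      Finset.sum_const_zero, sub_zero] at h2
    exact sub_eq_iff_eq_add.mp ((sub_eq_add_neg _ _).trans h2)
  have e3 : ∀ t j, F'' t (A t j) = -(A' t j + F' t (A' t j)) := by
    intro t j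
    have h := (hFd' t).clm_apply (hA' j t)
    simp only [e1] at h
    have h2 := h.unique (hA' j t).fun_neg
    rw [eq_sub_of_add_eq h2]
    abel
  have e4 : ∀ t j, F'' t (A' t j) + F' t (A'' t j) =
      A'' t j + ∑ i, (P t i j • A' t i + P' t i j • A t i) := by
    intro t j
    have h := (hFd' t).clm_apply (hA'' j t)
    simp only [e2] at h
    exact h.unique ((hA'' j t).fun_add
      (HasDerivAt.fun_sum fun i _ => (hPd i j t).fun_smul (hA' i t)))
  intro t j
  refine ⟨by rw [e3, smul_neg], ?_⟩
  have hPP : ∑ i, (P t * P t) i j • A t i = ∑ i, P t i j • ∑ k, P t k i • A t k := by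
    simp only [Matrix.mul_apply, Finset.sum_smul, Finset.smul_sum, smul_smul]
    rw [Finset.sum_comm]
    refine Finset.sum_congr rfl fun i _ => Finset.sum_congr rfl fun k _ => ?_
    rw [mul_comm]
  have e5 : F'' t (A' t j) = ∑ i, P t i j • A' t i + ∑ i, P' t i j • A t i
      + ∑ i, (P t * P t) i j • A t i - (2 : ℝ) • ∑ i, Q t i j • A t i := by
    have h := e4 t j
    rw [eA] at h
    simp only [map_sub, map_neg, map_sum, map_smul, e1, e2, smul_add, smul_neg,
      Finset.sum_add_distrib, Finset.sum_neg_distrib] at h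
    rw [← hPP] at h
    rw [eq_sub_of_add_eq h]
    module
  have e6 : ∑ i, P t i j • F'' t (A t i) = -((2 : ℝ) • ∑ i, P t i j • A' t i)
      - ∑ i, (P t * P t) i j • A t i := by
    simp only [e3, e2, smul_add, smul_neg,
      Finset.sum_add_distrib, Finset.sum_neg_distrib]
    rw [← hPP]
    module
  have e7 : ∑ i, Sch t i j • A t i = (2 : ℝ) • ∑ i, Q t i j • A t i
      - (1/2 : ℝ) • ∑ i, (P t * P t) i j • A t i - ∑ i, P' t i j • A t i := by
    rw [hSch]
    simp only [Matrix.sub_apply, Matrix.smul_apply, sub_smul, Finset.sum_sub_distrib,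
      smul_assoc, Finset.smul_sum]
  rw [e2, e7]
  simp only [map_add, map_smul, map_sum]
  rw [e6, e5]
  module
end

section
/- Proposition 2.8, second part: Let A be a fanning frame with Jacobi endomorphism K(t) = (1/4)F̈(t)², horizontal frame H_i(t) = P_h(t)ȧ_i(t), and Schwarzian {A,t}. Then for all t and all j: K(t)a_j(t) = (1/2)Σ_i a_i(t)·{A,t}_{ij} and K(t)H_j(t) = (1/2)Σ_i H_i(t)·{A,t}_{ij}. Equivalently, in the basis (a_1(t),…,a_n(t),H_1(t),…,H_n(t)) of V the matrix of K(t) is block-diagonal with both diagonal blocks equal to (1/2){A,t}; in particular K(t) preserves both ℓ(t) and h(t). -/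
/-- **Proposition 2.8, second part.**  For a fanning frame `A` with Jacobi endomorphism
`K(t) = (1/4) F̈(t)²`, horizontal frame `H_j(t) = P_h(t) ȧ_j(t) = (1/2)(ȧ_j(t) + Ḟ(t) ȧ_j(t))`
and Schwarzian `{A,t}`, one has, for all `t` and `j`:
`K(t) a_j(t) = (1/2) Σ_i a_i(t) {A,t}_{ij}` and `K(t) H_j(t) = (1/2) Σ_i H_i(t) {A,t}_{ij}`;
in particular `K(t)` preserves both `ℓ(t)` and `h(t)`. -/
theorem prop2_8_second_part
    {V : Type*} [NormedAddCommGroup V] [NormedSpace ℝ V] [FiniteDimensional ℝ V]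
    {n : ℕ} (hn : 0 < n) (hdim : Module.finrank ℝ V = 2 * n)
    (A A' A'' : ℝ → Fin n → V)
    (hA : ∀ i, ContDiff ℝ (⊤ : ℕ∞) (fun t => A t i))
    (hA' : ∀ i t, HasDerivAt (fun s => A s i) (A' t i) t)
    (hA'' : ∀ i t, HasDerivAt (fun s => A' s i) (A'' t i) t)
    (hfan : ∀ t, LinearIndependent ℝ (Sum.elim (A t) (A' t)) ∧
      Submodule.span ℝ (Set.range (Sum.elim (A t) (A' t))) = ⊤)
    (F F' F'' : ℝ → V →L[ℝ] V)
    (hF0 : ∀ t i, F t (A t i) = 0)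
    (hF1 : ∀ t i, F t (A' t i) = A t i)
    (hFd : ∀ t, HasDerivAt F (F' t) t)
    (hFd' : ∀ t, HasDerivAt F' (F'' t) t)
    (P Q P' : ℝ → Matrix (Fin n) (Fin n) ℝ)
    (hPQ : ∀ t j, A'' t j + ∑ i, P t i j • A' t i + ∑ i, Q t i j • A t i = 0)
    (hPd : ∀ i j t, HasDerivAt (fun s => P s i j) (P' t i j) t)
    (Sch : ℝ → Matrix (Fin n) (Fin n) ℝ)
    (hSch : ∀ t, Sch t = (2 : ℝ) • Q t - (1/2 : ℝ) • (P t * P t) - P' t)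
    (H : ℝ → Fin n → V)
    (hH : ∀ t j, H t j = (1/2 : ℝ) • (A' t j + F' t (A' t j))) :
    ∀ t j,
      (1/4 : ℝ) • F'' t (F'' t (A t j)) = (1/2 : ℝ) • ∑ i, Sch t i j • A t i ∧
      (1/4 : ℝ) • F'' t (F'' t (H t j)) = (1/2 : ℝ) • ∑ i, Sch t i j • H t i := by
  have e1 : ∀ t j, F' t (A t j) = - A t j := by
    intro t j
    have h := (hFd t).clm_apply (hA' j t)
    have h0 : (fun s => F s (A s j)) = fun _ => (0 : V) := funext fun s => hF0 s j
    rw [h0] at h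
    have := h.unique (hasDerivAt_const t (0 : V))
    rw [hF1] at this
    exact eq_neg_of_add_eq_zero_left this
  have eA : ∀ t j, A'' t j = - ∑ i, P t i j • A' t i - ∑ i, Q t i j • A t i := by
    intro t j
    have := hPQ t j
    rw [add_assoc] at this
    rw [eq_neg_of_add_eq_zero_left this]
    abel
  have e2 : ∀ t j, F' t (A' t j) = A' t j + ∑ i, P t i j • A t i := by
    intro t j
    have h := (hFd t).clm_apply (hA'' j t)
    have h0 : (fun s => F s (A' s j)) = fun s => A s j := funext fun s => hF1 s j
    rw [h0] at h
    have := h.unique (hA' j t)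
    rw [eA] at this
    simp only [map_sub, map_neg, map_sum, map_smul, hF0, hF1, smul_zero,
      Finset.sum_const_zero, sub_zero] at this
    rw [eq_sub_of_add_eq this]
    abel
  have eH : ∀ t j, H t j = A' t j + (1/2 : ℝ) • ∑ i, P t i j • A t i := by
    intro t j
    rw [hH, e2]
    module
  have e3 : ∀ t j, F'' t (A t j) = (-2 : ℝ) • H t j := by
    intro t j
    have h := (hFd' t).clm_apply (hA' j t)
    have h0 : (fun s => F' s (A s j)) = fun s => - A s j := funext fun s => e1 s j
    rw [h0] at h
    have := h.unique (hA' j t).neg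
    rw [e2] at this
    rw [eH, eq_sub_of_add_eq this]
    module
  have e4 : ∀ t j, F'' t (A' t j) = A'' t j - F' t (A'' t j)
      + ∑ i, (P t i j • A' t i + P' t i j • A t i) := by
    intro t j
    have h := (hFd' t).clm_apply (hA'' j t)
    have h0 : (fun s => F' s (A' s j)) = fun s => A' s j + ∑ i, P s i j • A s i :=
      funext fun s => e2 s j
    rw [h0] at h
    have h2 := (hA'' j t).add (HasDerivAt.fun_sum (u := Finset.univ)
      (fun i _ => (hPd i j t).smul (hA' i t)))
    have := h.unique h2
    rw [eq_sub_of_add_eq this]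
    abel
  have ePP : ∀ t j, ∑ i, (P t * P t) i j • A t i = ∑ i, P t i j • ∑ k, P t k i • A t k := by
    intro t j
    simp only [Matrix.mul_apply, Finset.sum_smul, Finset.smul_sum, smul_smul]
    rw [Finset.sum_comm]
    simp only [mul_comm]
  have eS : ∀ t j, ∑ i, Sch t i j • A t i = (2 : ℝ) • ∑ i, Q t i j • A t i
      - (1/2 : ℝ) • (∑ i, P t i j • ∑ k, P t k i • A t k) - ∑ i, P' t i j • A t i := by
    intro t j
    rw [← ePP]
    simp only [hSch, Matrix.sub_apply, Matrix.smul_apply, sub_smul, Finset.sum_sub_distrib,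
      Finset.smul_sum, smul_smul, smul_eq_mul]
  have sc : ∀ (c : ℝ) (p : Fin n → ℝ) (f : Fin n → V),
      ∑ i, p i • c • f i = c • ∑ i, p i • f i := by
    intro c p f
    rw [Finset.smul_sum]
    exact Finset.sum_congr rfl fun i _ => smul_comm _ _ _
  have e5 : ∀ t j, F'' t (H t j) = - ∑ i, Sch t i j • A t i := by
    intro t j
    rw [eS, eH, map_add, e4, eA]
    simp only [map_sub, map_neg, map_sum, map_smul, e1, e2, e3, eH, smul_add, smul_neg,
      Finset.sum_add_distrib, Finset.sum_neg_distrib]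
    simp only [sc, Finset.sum_add_distrib]
    module
  intro t j
  constructor
  · rw [e3, map_smul, e5]
    module
  · rw [e5]
    simp only [map_neg, map_sum, map_smul, e3]
    simp only [sc]
    module
end

section
/- Proposition 2.12(1): Let ω be a symplectic bilinear form on V and A a Lagrangian fanning frame. Then, for every t, the fundamental endomorphism F(t) lies in the symplectic Lie algebra of (V, ω): ω(F(t)u, v) + ω(u, F(t)v) = 0 for all u, v ∈ V. -/
/-- **Proposition 2.12(1).**  If `ω` is a symplectic bilinear form on the `2n`-dimensional
real vector space `V` and `A` is a Lagrangian fanning frame, then the fundamental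
endomorphism `F(t)` lies in the symplectic Lie algebra:
`ω(F(t)u, v) + ω(u, F(t)v) = 0` for all `u, v ∈ V` and all `t`. -/
theorem prop2_12_part1
    {V : Type*} [NormedAddCommGroup V] [NormedSpace ℝ V] [FiniteDimensional ℝ V]
    {n : ℕ} (hn : 0 < n) (hdim : Module.finrank ℝ V = 2 * n)
    (ω : V →ₗ[ℝ] V →ₗ[ℝ] ℝ)
    (halt : ∀ v, ω v v = 0)
    (hnd : ∀ v, (∀ w, ω v w = 0) → v = 0)
    (A A' : ℝ → Fin n → V)
    (hA : ∀ i, ContDiff ℝ (⊤ : ℕ∞) (fun t => A t i))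
    (hA' : ∀ i t, HasDerivAt (fun s => A s i) (A' t i) t)
    (hfan : ∀ t, LinearIndependent ℝ (Sum.elim (A t) (A' t)) ∧
      Submodule.span ℝ (Set.range (Sum.elim (A t) (A' t))) = ⊤)
    (hLag : ∀ t i j, ω (A t i) (A t j) = 0)
    (F : ℝ → V →L[ℝ] V)
    (hF0 : ∀ t i, F t (A t i) = 0)
    (hF1 : ∀ t i, F t (A' t i) = A t i) :
    ∀ t (u v : V), ω (F t u) v + ω u (F t v) = 0 := by
  intro t
  have key : ∀ i j, ω (A t i) (A' t j) + ω (A' t i) (A t j) = 0 := by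
    intro i j
    let B : V →L[ℝ] V →L[ℝ] ℝ := LinearMap.toContinuousLinearMap
      ((LinearMap.toContinuousLinearMap : (V →ₗ[ℝ] ℝ) ≃ₗ[ℝ] (V →L[ℝ] ℝ)).toLinearMap ∘ₗ ω)
    have hB : ∀ x y, B x y = ω x y := fun x y => rfl
    have h1 := B.hasDerivAt_of_bilinear (fun _ => hA' i t) (fun _ => hA' j t)
    have h2 : (fun s => B (A s i) (A s j)) = fun _ => (0 : ℝ) := by
      funext s
      rw [hB, hLag]
    rw [h2] at h1
    have h3 := h1.unique (hasDerivAt_const t (0 : ℝ))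
    simpa only [hB] using h3
  have hmem : ∀ x : V, x ∈ Submodule.span ℝ (Set.range (Sum.elim (A t) (A' t))) := by
    intro x
    rw [(hfan t).2]
    trivial
  intro u v
  induction hmem u using Submodule.span_induction with
  | zero => simp
  | add x y _ _ hx hy =>
    simp only [map_add, LinearMap.add_apply]
    linarith
  | smul c x _ hx =>
    simp only [map_smul, LinearMap.smul_apply]
    rw [← smul_add, hx, smul_zero]
  | mem x hx =>
    induction hmem v using Submodule.span_induction with
    | zero => simp
    | add y z _ _ hy hz =>
      simp only [map_add]
      linarith
    | smul c y _ hy =>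
      simp only [map_smul]
      rw [← smul_add, hy, smul_zero]
    | mem y hy =>
      obtain ⟨i | i, rfl⟩ := hx <;> obtain ⟨j | j, rfl⟩ := hy <;>
        simp [hF0, hF1, hLag, key]
end

section
/- Proposition 2.14(2) (transformation under reparametrization): Let ω be a symplectic bilinear form on V, A a Lagrangian fanning frame, and s : ℝ → ℝ a smooth function with ṡ(t) ≠ 0 for all t. Let B be the reparametrized frame b_i(t) = a_i(s(t)). Then B is a Lagrangian fanning frame, its Wronskian matrix satisfies W_B(t) = ṡ(t)·W_A(s(t)), and its Jacobi endomorphism satisfies K_B(t) = ṡ(t)²·K_A(s(t)) + (1/2){s(t),t}·id_V, where {s(t),t} = (d/dt)(s̈(t)/ṡ(t)) − (1/2)(s̈(t)/ṡ(t))² is the Schwarzian derivative of s. -/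
theorem ext_on_frame {V : Type*} [NormedAddCommGroup V] [NormedSpace ℝ V] {n : ℕ}
    (a b : Fin n → V) (h : Submodule.span ℝ (Set.range (Sum.elim a b)) = ⊤)
    (P Q : V →L[ℝ] V) (h0 : ∀ i, P (a i) = Q (a i)) (h1 : ∀ i, P (b i) = Q (b i)) : P = Q := by
  have : (P : V →ₗ[ℝ] V) = Q := by
    apply LinearMap.ext_on_range h
    rintro (i | i)
    · simpa using h0 i
    · simpa using h1 i
  ext v
  exact congrArg (fun L : V →ₗ[ℝ] V => L v) this

/-- **Proposition 2.14(2).**  Let `ω` be a symplectic bilinear form on `V`, `A` a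
Lagrangian fanning frame, and `s : ℝ → ℝ` smooth with `ṡ(t) ≠ 0`.  The reparametrized
frame `b_i(t) = a_i(s(t))` (whose derivative frame is `ṡ(t)·ȧ_i(s(t))`) is a Lagrangian
fanning frame, its Wronskian matrix is `ṡ(t)·W_A(s(t))`, and its Jacobi endomorphism is
`K_B(t) = ṡ(t)²·K_A(s(t)) + (1/2){s(t),t}·id`, where `{s,t} = (d/dt)(s̈/ṡ) − (1/2)(s̈/ṡ)²`
is the Schwarzian derivative of `s` (here `r = s̈/ṡ` and `r'` its derivative). -/
theorem prop2_14_part2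
    {V : Type*} [NormedAddCommGroup V] [NormedSpace ℝ V] [FiniteDimensional ℝ V]
    {n : ℕ} (hn : 0 < n) (hdim : Module.finrank ℝ V = 2 * n)
    (ω : V →ₗ[ℝ] V →ₗ[ℝ] ℝ)
    (halt : ∀ v, ω v v = 0)
    (hnd : ∀ v, (∀ w, ω v w = 0) → v = 0)
    (A A' : ℝ → Fin n → V)
    (hA : ∀ i, ContDiff ℝ (⊤ : ℕ∞) (fun t => A t i))
    (hA' : ∀ i t, HasDerivAt (fun u => A u i) (A' t i) t)
    (hfan : ∀ t, LinearIndependent ℝ (Sum.elim (A t) (A' t)) ∧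
      Submodule.span ℝ (Set.range (Sum.elim (A t) (A' t))) = ⊤)
    (hLag : ∀ t i j, ω (A t i) (A t j) = 0)
    (F F' F'' : ℝ → V →L[ℝ] V)
    (hF0 : ∀ t i, F t (A t i) = 0)
    (hF1 : ∀ t i, F t (A' t i) = A t i)
    (hFd : ∀ t, HasDerivAt F (F' t) t)
    (hFd' : ∀ t, HasDerivAt F' (F'' t) t)
    (s s' s'' : ℝ → ℝ)
    (hs : ContDiff ℝ (⊤ : ℕ∞) s)
    (hs' : ∀ t, HasDerivAt s (s' t) t)
    (hs'' : ∀ t, HasDerivAt s' (s'' t) t)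
    (hsne : ∀ t, s' t ≠ 0)
    (r r' : ℝ → ℝ)
    (hr : ∀ t, r t = s'' t / s' t)
    (hrd : ∀ t, HasDerivAt r (r' t) t)
    (FB FB' FB'' : ℝ → V →L[ℝ] V)
    (hFB0 : ∀ t i, FB t (A (s t) i) = 0)
    (hFB1 : ∀ t i, FB t (s' t • A' (s t) i) = A (s t) i)
    (hFBd : ∀ t, HasDerivAt FB (FB' t) t)
    (hFBd' : ∀ t, HasDerivAt FB' (FB'' t) t) :
    -- `B` is a fanning frame with derivative frame `ṡ(t)·A'(s(t))`
    (∀ i t, HasDerivAt (fun u => A (s u) i) (s' t • A' (s t) i) t) ∧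
    (∀ t, LinearIndependent ℝ
        (Sum.elim (fun i => A (s t) i) (fun i => s' t • A' (s t) i)) ∧
      Submodule.span ℝ (Set.range
        (Sum.elim (fun i => A (s t) i) (fun i => s' t • A' (s t) i))) = ⊤) ∧
    -- `B` is Lagrangian and `W_B(t) = ṡ(t)·W_A(s(t))`
    (∀ t i j, ω (A (s t) i) (A (s t) j) = 0) ∧
    (∀ t i j, ω (A (s t) i) (s' t • A' (s t) j) = s' t * ω (A (s t) i) (A' (s t) j)) ∧
    -- `K_B(t) = ṡ(t)² K_A(s(t)) + (1/2){s(t),t}·id`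
    (∀ t (v : V), (1/4 : ℝ) • FB'' t (FB'' t v) =
      (s' t)^2 • ((1/4 : ℝ) • F'' (s t) (F'' (s t) v)) +
        ((1/2 : ℝ) * (r' t - (1/2 : ℝ) * (r t)^2)) • v) := by
  have hBfan : ∀ t, LinearIndependent ℝ
        (Sum.elim (fun i => A (s t) i) (fun i => s' t • A' (s t) i)) ∧
      Submodule.span ℝ (Set.range
        (Sum.elim (fun i => A (s t) i) (fun i => s' t • A' (s t) i))) = ⊤ := by
    intro t
    obtain ⟨h1, h2⟩ := hfan (s t)
    have hspan : Submodule.span ℝ (Set.range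
        (Sum.elim (fun i => A (s t) i) (fun i => s' t • A' (s t) i))) = ⊤ := by
      rw [eq_top_iff, ← h2, Submodule.span_le]
      rintro _ ⟨i | i, rfl⟩
      · exact Submodule.subset_span ⟨Sum.inl i, rfl⟩
      · have : s' t • A' (s t) i ∈ Submodule.span ℝ (Set.range
          (Sum.elim (fun i => A (s t) i) (fun i => s' t • A' (s t) i))) :=
          Submodule.subset_span ⟨Sum.inr i, rfl⟩
        have h3 := Submodule.smul_mem _ (s' t)⁻¹ this
        rw [inv_smul_smul₀ (hsne t)] at h3
        exact h3
    refine ⟨?_, hspan⟩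
    apply linearIndependent_of_top_le_span_of_card_eq_finrank hspan.ge
    simp [hdim, two_mul]
  refine ⟨fun i t => (hA' i (s t)).scomp t (hs' t), hBfan, fun t i j => hLag _ i j,
    fun t i j => by simp, ?_⟩
  -- second derivative of the frame
  have hA'' : ∀ i t, ∃ w, HasDerivAt (fun u => A' u i) w t := by
    intro i t
    have e : (fun u => A' u i) = deriv (fun u => A u i) := by
      funext u
      exact (hA' i u).deriv.symm
    have hd : ContDiff ℝ 1 (deriv (fun u => A u i)) := by
      have h2 : ContDiff ℝ (1 + 1) (fun u => A u i) := (hA i).of_le (by norm_cast)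
      exact (contDiff_succ_iff_deriv.1 h2).2.2
    rw [e]
    exact ⟨_, (hd.differentiable one_ne_zero t).hasDerivAt⟩
  have hFA : ∀ t i, F' t (A t i) = - A t i := by
    intro t i
    have h1 := (hFd t).clm_apply (hA' i t)
    have h2 : (fun u => F u (A u i)) = fun _ => 0 := funext fun u => hF0 u i
    rw [h2] at h1
    have h3 := h1.unique (hasDerivAt_const t 0)
    rw [hF1] at h3
    exact eq_neg_of_add_eq_zero_left h3
  have hFF : ∀ t, F t * F t = 0 := by
    intro t
    apply ext_on_frame _ _ (hfan t).2
    · intro i; simp [hF0]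
    · intro i; simp [hF0, hF1]
  have hII : ∀ t, F' t * F' t = 1 := by
    intro t
    have key : ∀ v, F' t (F t v) = - F t v := by
      have : F' t * F t = - F t := by
        apply ext_on_frame _ _ (hfan t).2
        · intro i; simp [hF0]
        · intro i; simp [hF1, hFA]
      intro v
      exact congrArg (fun L : V →L[ℝ] V => L v) this
    apply ext_on_frame _ _ (hfan t).2
    · intro i; simp [hFA]
    · intro i
      obtain ⟨w, hw⟩ := hA'' i t
      have h1 := (hFd t).clm_apply hw
      have h2 : (fun u => F u (A' u i)) = fun u => A u i := funext fun u => hF1 u i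
      rw [h2] at h1
      have h3 := h1.unique (hA' i t)
      have h4 : F' t (A' t i) = A' t i - F t w := eq_sub_of_add_eq h3
      simp [h4, key]
  have hI1 : ∀ t, F' t * F t + F t * F' t = 0 := by
    intro t
    have h1 := (hFd t).mul (hFd t)
    have h2 : F * F = fun _ => 0 := funext hFF
    rw [h2] at h1
    exact h1.unique (hasDerivAt_const t 0)
  have hI2 : ∀ t, F'' t * F t + F t * F'' t = -2 := by
    intro t
    have h1 := ((hFd' t).mul (hFd t)).add ((hFd t).mul (hFd' t))
    have h2 : F' * F + F * F' = fun _ => 0 := funext hI1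
    rw [h2] at h1
    have h3 := h1.unique (hasDerivAt_const t 0)
    rw [hII] at h3
    have h4 : F'' t * F t + F t * F'' t = -(1 + 1) := by
      rw [← sub_eq_zero, ← h3]; abel
    rw [h4, one_add_one_eq_two]
  have hI3 : ∀ t, F'' t * F' t + F' t * F'' t = 0 := by
    intro t
    have h1 := (hFd' t).mul (hFd' t)
    have h2 : F' * F' = fun _ => 1 := funext hII
    rw [h2] at h1
    exact h1.unique (hasDerivAt_const t 1)
  -- the reparametrized endomorphism
  have hB : FB = fun t => (s' t)⁻¹ • F (s t) := by
    funext t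
    apply ext_on_frame _ _ (hBfan t).2
    · intro i; simp [hF0, hFB0]
    · intro i
      rw [hFB1]
      simp [hF1, hsne t]
  have hp : ∀ t, HasDerivAt (fun t => (s' t)⁻¹) (-(r t * (s' t)⁻¹)) t := by
    intro t
    have h1 := (hs'' t).inv (hsne t)
    have h2 : -(r t * (s' t)⁻¹) = -s'' t / s' t ^ 2 := by
      rw [hr]
      have := hsne t
      field_simp
    rw [h2]
    exact h1
  have hB' : FB' = fun t => F' (s t) - (r t * (s' t)⁻¹) • F (s t) := by
    funext t
    have h1 := (hp t).smul ((hFd (s t)).scomp t (hs' t))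
    have h2 := hFBd t
    rw [hB] at h2
    rw [h2.unique h1]
    simp only [Function.comp, inv_smul_smul₀ (hsne t)]
    module
  have hB'' : ∀ t, FB'' t = s' t • F'' (s t) - r t • F' (s t)
      - ((r' t - r t ^ 2) * (s' t)⁻¹) • F (s t) := by
    intro t
    have h1 := ((hFd' (s t)).scomp t (hs' t)).sub
      (((hrd t).mul (hp t)).smul ((hFd (s t)).scomp t (hs' t)))
    have h2 := hFBd' t
    rw [hB'] at h2
    rw [h2.unique h1]
    have h3 : (r t * (s' t)⁻¹) • s' t • F' (s t) = r t • F' (s t) := by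
      rw [smul_smul, mul_assoc, inv_mul_cancel₀ (hsne t), mul_one]
    simp only [Function.comp, Pi.mul_apply, h3]
    module
  intro t v
  have e1 := congrArg (fun L : V →L[ℝ] V => L v) (hFF (s t))
  have e2 := congrArg (fun L : V →L[ℝ] V => L v) (hII (s t))
  have e3 := congrArg (fun L : V →L[ℝ] V => L v) (hI1 (s t))
  have e4 : F'' (s t) (F (s t) v) + F (s t) (F'' (s t) v) = (-2 : ℝ) • v := by
    have h : F'' (s t) * F (s t) + F (s t) * F'' (s t) = (-2 : ℝ) • (1 : V →L[ℝ] V) := by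
      rw [hI2]
      rw [neg_smul, two_smul, one_add_one_eq_two]
    exact congrArg (fun L : V →L[ℝ] V => L v) h
  have e5 := congrArg (fun L : V →L[ℝ] V => L v) (hI3 (s t))
  simp at e1 e2 e3 e5
  rw [hB'']
  simp only [sub_apply, smul_apply, map_sub, map_smul]
  have hq : s' t * (s' t)⁻¹ = 1 := mul_inv_cancel₀ (hsne t)
  generalize (s' t)⁻¹ = q at hq ⊢
  have e6 : (s' t * q) • v = v := by rw [hq, one_smul]
  generalize r t = x
  generalize r' t = y
  generalize s' t = p at *
  generalize hc : (y - x ^ 2) * q = c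
  have hc' : p * c = y - x ^ 2 := by rw [← hc]; linear_combination (y - x^2) * hq
  have hy : y = p * c + x ^ 2 := by linear_combination -hc'
  subst hy
  linear_combination (norm := module) (1/4 * c^2 : ℝ) • e1 + (1/4 * x^2 : ℝ) • e2
    + (1/4 * (x * c) : ℝ) • e3 - (1/4 * (p * c) : ℝ) • e4 - (1/4 * (x * p) : ℝ) • e5
end

section
/- Proposition 5.4: Let ω be a symplectic bilinear form on V and A a Lagrangian fanning frame, with horizontal frame H_i(t) = P_h(t)ȧ_i(t) and Jacobi endomorphism K(t). Then for all t and all i, j: ω(H_i(t), Ḣ_j(t)) = ω(K(t)a_i(t), ȧ_j(t)). Equivalently, the Wronskian W_h(t) of the horizontal curve h(t) and the Wronskian W(t) of ℓ(t) satisfy W_h(t)(H(t)u, H(t)v) = W(t)(K(t)u, v) for all u, v ∈ ℓ(t), where H(t) : ℓ(t) → h(t) is the linear map with H(t)a_i(t) = H_i(t). -/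
/-- **Proposition 5.4.**  Let `ω` be a symplectic bilinear form on `V` and `A` a
Lagrangian fanning frame, with horizontal frame `H_i(t) = P_h(t) ȧ_i(t)` (whose
derivative is `Ḣ_i(t)`) and Jacobi endomorphism `K(t) = (1/4) F̈(t)²`.  Then for all `t`,
`i`, `j`: `ω(H_i(t), Ḣ_j(t)) = ω(K(t) a_i(t), ȧ_j(t))`; i.e. the Wronskian of the
horizontal curve `h(t)` evaluated on `H(t)u, H(t)v` equals `W(t)(K(t)u, v)`. -/
theorem prop5_4
    {V : Type*} [NormedAddCommGroup V] [NormedSpace ℝ V] [FiniteDimensional ℝ V]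
    {n : ℕ} (hn : 0 < n) (hdim : Module.finrank ℝ V = 2 * n)
    (ω : V →ₗ[ℝ] V →ₗ[ℝ] ℝ)
    (halt : ∀ v, ω v v = 0)
    (hnd : ∀ v, (∀ w, ω v w = 0) → v = 0)
    (A A' : ℝ → Fin n → V)
    (hA : ∀ i, ContDiff ℝ (⊤ : ℕ∞) (fun t => A t i))
    (hA' : ∀ i t, HasDerivAt (fun s => A s i) (A' t i) t)
    (hfan : ∀ t, LinearIndependent ℝ (Sum.elim (A t) (A' t)) ∧
      Submodule.span ℝ (Set.range (Sum.elim (A t) (A' t))) = ⊤)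
    (hLag : ∀ t i j, ω (A t i) (A t j) = 0)
    (F F' F'' : ℝ → V →L[ℝ] V)
    (hF0 : ∀ t i, F t (A t i) = 0)
    (hF1 : ∀ t i, F t (A' t i) = A t i)
    (hFd : ∀ t, HasDerivAt F (F' t) t)
    (hFd' : ∀ t, HasDerivAt F' (F'' t) t)
    (H Hd : ℝ → Fin n → V)
    (hH : ∀ t j, H t j = (1/2 : ℝ) • (A' t j + F' t (A' t j)))
    (hHd : ∀ j t, HasDerivAt (fun u => H u j) (Hd t j) t) :
    ∀ t i j, ω (H t i) (Hd t j) = ω ((1/4 : ℝ) • F'' t (F'' t (A t i))) (A' t j) := by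
  intro t i j
  have hext : ∀ (s : ℝ) (f : V →ₗ[ℝ] V), (∀ k, f (A s k) = 0) → (∀ k, f (A' s k) = 0) →
      ∀ v, f v = 0 := by
    intro s f h0 h1 v
    have hv : v ∈ Submodule.span ℝ (Set.range (Sum.elim (A s) (A' s))) := by
      rw [(hfan s).2]; trivial
    induction hv using Submodule.span_induction with
    | mem x hx =>
      obtain ⟨k, rfl⟩ := hx
      cases k with
      | inl k => exact h0 k
      | inr k => exact h1 k
    | zero => simp
    | add x y _ _ hx hy => rw [map_add, hx, hy, add_zero]
    | smul c x _ hx => rw [map_smul, hx, smul_zero]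
  have hext' : ∀ (s : ℝ) (f : V →ₗ[ℝ] ℝ), (∀ k, f (A s k) = 0) → (∀ k, f (A' s k) = 0) →
      ∀ v, f v = 0 := by
    intro s f h0 h1 v
    have hv : v ∈ Submodule.span ℝ (Set.range (Sum.elim (A s) (A' s))) := by
      rw [(hfan s).2]; trivial
    induction hv using Submodule.span_induction with
    | mem x hx =>
      obtain ⟨k, rfl⟩ := hx
      cases k with
      | inl k => exact h0 k
      | inr k => exact h1 k
    | zero => simp
    | add x y _ _ hx hy => rw [map_add, hx, hy, add_zero]
    | smul c x _ hx => rw [map_smul, hx, smul_zero]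
  have hskew : ∀ v w, ω v w = - ω w v := by
    intro v w
    have h := halt (v + w)
    simp only [map_add, LinearMap.add_apply, halt] at h
    linarith
  -- second derivative
  have hA'' : ∀ k s, HasDerivAt (fun u => A' u k) (deriv (fun u => A' u k) s) s := by
    intro k s
    have h1 : (fun u => A' u k) = deriv (fun u => A u k) := by
      funext u; exact ((hA' k u).deriv).symm
    have h2 : ContDiff ℝ 1 (deriv (fun u => A u k)) := by
      have h3 : ContDiff ℝ (1 + 1) (fun u => A u k) :=
        (hA k).of_le (by norm_cast)
      exact (contDiff_succ_iff_deriv.1 h3).2.2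
    rw [← h1] at h2
    exact ((h2.differentiable (by norm_num)) s).hasDerivAt
  -- F' A = -A
  have e1 : ∀ s k, F' s (A s k) = - A s k := by
    intro s k
    have h := (hFd s).clm_apply (hA' k s)
    have h2 : (fun u => F u (A u k)) = fun _ => (0 : V) := by
      funext u; exact hF0 u k
    rw [h2] at h
    have h3 := h.unique (hasDerivAt_const s (0 : V))
    rw [hF1] at h3
    exact eq_neg_of_add_eq_zero_left h3
  -- F'' A + F' A' = - A'
  have e2 : ∀ s k, F'' s (A s k) + F' s (A' s k) = - A' s k := by
    intro s k
    have h := (hFd' s).clm_apply (hA' k s)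
    have h2 : (fun u => F' u (A u k)) = fun u => - A u k := by
      funext u; exact e1 u k
    rw [h2] at h
    exact h.unique (hA' k s).neg
  have e3 : ∀ s k, F' s (A' s k) + F s (deriv (fun u => A' u k) s) = A' s k := by
    intro s k
    have h := (hFd s).clm_apply (hA'' k s)
    have h2 : (fun u => F u (A' u k)) = fun u => A u k := by
      funext u; exact hF1 u k
    rw [h2] at h
    exact h.unique (hA' k s)
  have e4 : ∀ s v, F' s (F s v) + F s v = 0 := by
    intro s v
    refine hext s (((F' s).comp (F s) + F s : V →L[ℝ] V) : V →ₗ[ℝ] V) ?_ ?_ v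
    · intro k; simp [hF0]
    · intro k; simp [hF1, e1]
  have e5 : ∀ s k, F' s (H s k) = H s k := by
    intro s k
    have h3 := eq_sub_of_add_eq (e3 s k)
    have h4 := eq_neg_of_add_eq_zero_left (e4 s (deriv (fun u => A' u k) s))
    have h5 : F' s (F' s (A' s k)) = A' s k := by
      conv_lhs => rw [h3]
      rw [map_sub, h4, h3]; abel
    rw [hH, map_smul, map_add, h5, add_comm]
  have e6 : ∀ k, F'' t (A t k) = (-2 : ℝ) • H t k := by
    intro k
    rw [hH, smul_smul, eq_sub_of_add_eq (e2 t k)]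
    norm_num
    abel
  -- symplectic
  let B : V →L[ℝ] V →L[ℝ] ℝ := LinearMap.toContinuousLinearMap
    ((LinearMap.toContinuousLinearMap : (V →ₗ[ℝ] ℝ) ≃ₗ[ℝ] (V →L[ℝ] ℝ)).toLinearMap ∘ₗ ω)
  have hB : ∀ v w, B v w = ω v w := fun v w => rfl
  have w1 : ∀ s k l, ω (A' s k) (A s l) + ω (A s k) (A' s l) = 0 := by
    intro s k l
    have h := ((B.hasFDerivAt.comp_hasDerivAt s (hA' k s))).clm_apply (hA' l s)
    have h2 : (fun u => (B ∘ fun s => A s k) u (A u l)) = fun _ => (0 : ℝ) := by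
      funext u; exact hLag u k l
    rw [h2] at h
    exact h.unique (hasDerivAt_const s (0 : ℝ))
  have s0 : ∀ s v w, ω (F s v) w + ω v (F s w) = 0 := by
    intro s v w
    refine hext' s (ω.flip w ∘ₗ (F s : V →ₗ[ℝ] V) + ω.flip (F s w)) ?_ ?_ v
    · intro k
      refine hext' s (ω (F s (A s k)) + ω (A s k) ∘ₗ (F s : V →ₗ[ℝ] V)) ?_ ?_ w
      · intro l; simp [hF0]
      · intro l; simp [hF0, hF1, hLag]
    · intro k
      refine hext' s (ω (F s (A' s k)) + ω (A' s k) ∘ₗ (F s : V →ₗ[ℝ] V)) ?_ ?_ w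
      · intro l; simp [hF0, hF1, hLag]
      · intro l
        have := w1 s k l
        simp [hF1]; linarith
  have sd : ∀ (G G' : ℝ → V →L[ℝ] V), (∀ s, HasDerivAt G (G' s) s) →
      (∀ s v w, ω (G s v) w + ω v (G s w) = 0) → ∀ s v w, ω (G' s v) w + ω v (G' s w) = 0 := by
    intro G G' hG h0 s v w
    have a1 := (B.flip w).hasFDerivAt.comp_hasDerivAt s ((hG s).clm_apply (hasDerivAt_const s v))
    have a2 := (B v).hasFDerivAt.comp_hasDerivAt s ((hG s).clm_apply (hasDerivAt_const s w))
    have h := a1.add a2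
    have h2 : (((B.flip w) ∘ fun u => G u v) + ((B v) ∘ fun u => G u w)) = fun _ => (0 : ℝ) := by
      funext u; exact h0 u v w
    rw [h2] at h
    have h3 := h.unique (hasDerivAt_const s (0 : ℝ))
    simpa [hB] using h3
  have s1 := sd F F' hFd s0
  have s2 := sd F' F'' hFd' s1
  have hHd2 : Hd t j = (1/2 : ℝ) • (deriv (fun u => A' u j) t +
      (F'' t (A' t j) + F' t (deriv (fun u => A' u j) t))) := by
    have h := ((hA'' j t).add ((hFd' t).clm_apply (hA'' j t))).const_smul (1/2 : ℝ)
    refine (hHd j t).unique (h.congr_of_eventuallyEq (Filter.Eventually.of_forall ?_))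
    intro u; exact hH u j
  have f1 := s1 t (H t i) (deriv (fun u => A' u j) t)
  have f2 := s2 t (H t i) (A' t j)
  rw [e5] at f1
  rw [hHd2, e6]
  simp only [map_smul, map_add, LinearMap.smul_apply, smul_eq_mul]
  linarith
end

section
/- Lemma 6.2 (the unit co-sphere of a Randers-type deformation is a translate): Let E be a finite-dimensional real vector space and F₀ : E → ℝ a continuous function with F₀(v) > 0 for all v ≠ 0 and F₀(λv) = λF₀(v) for all λ ≥ 0 and v ∈ E. For a linear functional ξ on E define the dual F₀*(ξ) = sup{ξ(v) : v ∈ E, F₀(v) = 1}. Let θ be a linear functional on E such that F := F₀ + θ also satisfies F(v) > 0 for all v ≠ 0, and define F*(ξ) = sup{ξ(v) : F(v) = 1}. Then the unit co-spheres satisfy {ξ : F*(ξ) = 1} = {θ + η : F₀*(η) = 1}; equivalently, for every linear functional ξ on E, F*(ξ) = 1 if and only if F₀*(ξ − θ) = 1. -/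
theorem cosphere_aux
    {E : Type*} [NormedAddCommGroup E] [NormedSpace ℝ E] [FiniteDimensional ℝ E]
    (G : E → ℝ) (hc : Continuous G) (hp : ∀ v : E, v ≠ 0 → 0 < G v)
    (hh : ∀ (c : ℝ), 0 ≤ c → ∀ v : E, G (c • v) = c * G v) (ξ : E →ₗ[ℝ] ℝ) :
    sSup ((fun v => ξ v) '' {v : E | G v = 1}) = 1 ↔
      (∀ v, ξ v ≤ G v) ∧ ∃ v, v ≠ 0 ∧ ξ v = G v := by
  have h0 : G 0 = 0 := by simpa using hh 0 le_rfl 0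
  have hn0 : ∀ v, G v = 1 → v ≠ 0 := by
    rintro v hv rfl
    rw [h0] at hv
    exact zero_ne_one hv
  have hnorm : ∀ v, v ≠ 0 → G ((G v)⁻¹ • v) = 1 := by
    intro v hv
    rw [hh _ (inv_nonneg.2 (hp v hv).le), inv_mul_cancel₀ (hp v hv).ne']
  constructor
  · intro hs
    have hne : {v : E | G v = 1}.Nonempty := by
      by_contra hne
      rw [Set.not_nonempty_iff_eq_empty] at hne
      simp [hne] at hs
    have hunit : ∀ v : E, v ≠ 0 → ‖v‖⁻¹ • v ∈ Metric.sphere (0 : E) 1 := by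
      intro v hv
      have : ‖v‖ ≠ 0 := norm_ne_zero_iff.2 hv
      simp [norm_smul, this]
    have hcpt : IsCompact {v : E | G v = 1} := by
      haveI : ProperSpace E := FiniteDimensional.proper ℝ E
      obtain ⟨u, hu⟩ := hne
      obtain ⟨m, hm, hmin⟩ := (isCompact_sphere (0 : E) 1).exists_isMinOn
        ⟨_, hunit u (hn0 u hu)⟩ hc.continuousOn
      have hm0 : m ≠ 0 := by
        rintro rfl
        simp at hm
      refine (isCompact_closedBall (0 : E) (G m)⁻¹).of_isClosed_subset
        (isClosed_eq hc continuous_const) ?_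
      intro v hv
      have hv1 : G v = 1 := hv
      have hv0 := hn0 v hv
      have h1 : G m ≤ G (‖v‖⁻¹ • v) := hmin (hunit v hv0)
      rw [hh _ (by positivity), hv1, mul_one] at h1
      rw [mem_closedBall_zero_iff]
      exact (le_inv_comm₀ (hp m hm0) (norm_pos_iff.2 hv0)).1 h1
    have hξ : Continuous fun v => ξ v := ξ.continuous_of_finiteDimensional
    have hci := hcpt.image hξ
    constructor
    · intro v
      by_cases hv : v = 0
      · simp [hv, h0]
      · have h1 := le_csSup hci.bddAbove ⟨_, hnorm v hv, rfl⟩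
        rw [hs] at h1
        simp only [map_smul, smul_eq_mul] at h1
        rwa [inv_mul_le_iff₀ (hp v hv), mul_one] at h1
    · obtain ⟨v, hv, hv1⟩ := hci.sSup_mem (hne.image _)
      refine ⟨v, hn0 v hv, ?_⟩
      have hv2 : G v = 1 := hv
      rw [hv2, ← hs, ← hv1]
  · rintro ⟨hle, v, hv, he⟩
    apply IsGreatest.csSup_eq
    refine ⟨⟨_, hnorm v hv, ?_⟩, ?_⟩
    · simp [he, (hp v hv).ne']
    · rintro _ ⟨w, hw, rfl⟩
      have hw1 : G w = 1 := hw
      rw [← hw1]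
      exact hle w

/-- **Lemma 6.2.**  Let `E` be a finite-dimensional real vector space, `F₀ : E → ℝ`
continuous, positive on nonzero vectors and positively 1-homogeneous, and `θ` a linear
functional such that `F = F₀ + θ` is also positive on nonzero vectors.  With duals
defined by `G*(ξ) = sup {ξ(v) : G(v) = 1}`, the unit co-spheres satisfy
`{ξ : F*(ξ) = 1} = θ + {η : F₀*(η) = 1}`; equivalently, for every linear functional `ξ`,
`F*(ξ) = 1 ↔ F₀*(ξ − θ) = 1`. -/
theorem unit_cosphere_of_randers_deformation
    {E : Type*} [NormedAddCommGroup E] [NormedSpace ℝ E] [FiniteDimensional ℝ E]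
    (F₀ : E → ℝ)
    (hF₀cont : Continuous F₀)
    (hF₀pos : ∀ v : E, v ≠ 0 → 0 < F₀ v)
    (hF₀hom : ∀ (c : ℝ), 0 ≤ c → ∀ v : E, F₀ (c • v) = c * F₀ v)
    (θ : E →ₗ[ℝ] ℝ)
    (hFpos : ∀ v : E, v ≠ 0 → 0 < F₀ v + θ v) :
    ∀ ξ : E →ₗ[ℝ] ℝ,
      sSup ((fun v => ξ v) '' {v : E | F₀ v + θ v = 1}) = 1 ↔
      sSup ((fun v => ξ v - θ v) '' {v : E | F₀ v = 1}) = 1 := by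
  intro ξ
  have hθ : Continuous fun v => θ v := θ.continuous_of_finiteDimensional
  have h1 := cosphere_aux (fun v => F₀ v + θ v) (hF₀cont.add hθ) hFpos
    (by intro c hc v; simp only [hF₀hom c hc, map_smul, smul_eq_mul]; ring) ξ
  have h2 := cosphere_aux F₀ hF₀cont hF₀pos hF₀hom (ξ - θ)
  simp only [LinearMap.sub_apply, sub_le_iff_le_add, sub_eq_iff_eq_add] at h2
  exact h1.trans h2.symm
end

section
/- Frame-independence of the fundamental endomorphism: Let A = (a_1, …, a_n) be a fanning frame in V, let G : ℝ → GL_n(ℝ) be a smooth curve of invertible n×n real matrices, and define the frame B = (b_1, …, b_n) by b_j(t) = Σ_i a_i(t)·G(t)_{ij}, so that B spans the same curve of subspaces ℓ(t) as A. Then B is also fanning, and the fundamental endomorphisms coincide: F_B(t) = F_A(t) for all t. In particular the fundamental endomorphism depends only on the curve t ↦ ℓ(t) and not on the chosen frame. -/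
/-- **Frame-independence of the fundamental endomorphism.**  Let `A` be a fanning frame
in `V`, `G : ℝ → GL_n(ℝ)` a smooth curve of invertible matrices, and let `B` be the
frame `b_j(t) = Σ_i a_i(t)·G(t)_{ij}` (spanning the same curve of subspaces).  Then `B`
is fanning and the fundamental endomorphisms coincide: `F_B(t) = F_A(t)` for all `t`. -/
theorem fundamental_endomorphism_frame_independent
    {V : Type*} [NormedAddCommGroup V] [NormedSpace ℝ V] [FiniteDimensional ℝ V]
    {n : ℕ} (hn : 0 < n) (hdim : Module.finrank ℝ V = 2 * n)
    (A A' : ℝ → Fin n → V)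
    (hA : ∀ i, ContDiff ℝ (⊤ : ℕ∞) (fun t => A t i))
    (hA' : ∀ i t, HasDerivAt (fun s => A s i) (A' t i) t)
    (hfan : ∀ t, LinearIndependent ℝ (Sum.elim (A t) (A' t)) ∧
      Submodule.span ℝ (Set.range (Sum.elim (A t) (A' t))) = ⊤)
    (F : ℝ → V →L[ℝ] V)
    (hF0 : ∀ t i, F t (A t i) = 0)
    (hF1 : ∀ t i, F t (A' t i) = A t i)
    (G : ℝ → Matrix (Fin n) (Fin n) ℝ)
    (hG : ∀ i j, ContDiff ℝ (⊤ : ℕ∞) (fun t => G t i j))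
    (hGinv : ∀ t, IsUnit (G t))
    (B B' : ℝ → Fin n → V)
    (hB : ∀ t j, B t j = ∑ i, G t i j • A t i)
    (hB' : ∀ j t, HasDerivAt (fun u => B u j) (B' t j) t)
    (FB : ℝ → V →L[ℝ] V)
    (hFB0 : ∀ t i, FB t (B t i) = 0)
    (hFB1 : ∀ t i, FB t (B' t i) = B t i) :
    (∀ t, LinearIndependent ℝ (Sum.elim (B t) (B' t)) ∧
      Submodule.span ℝ (Set.range (Sum.elim (B t) (B' t))) = ⊤) ∧
    (∀ t, FB t = F t) := by
  have hBd : ∀ t j, B' t j = ∑ i, (G t i j • A' t i + deriv (fun s => G s i j) t • A t i) := by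
    intro t j
    have h1 : HasDerivAt (fun u => ∑ i, G u i j • A u i)
        (∑ i, (G t i j • A' t i + deriv (fun s => G s i j) t • A t i)) t := by
      apply HasDerivAt.fun_sum
      intro i _
      have hd : DifferentiableAt ℝ (fun s => G s i j) t :=
        ((hG i j).differentiable (by simp)).differentiableAt
      exact hd.hasDerivAt.smul (hA' i t)
    have h2 : (fun u => B u j) = fun u => ∑ i, G u i j • A u i := funext fun u => hB u j
    have h3 := hB' j t
    rw [h2] at h3
    exact h3.unique h1
  have key : ∀ t (X : Fin n → V) k,
      ∑ j, (G t)⁻¹ j k • ∑ i, G t i j • X i = X k := by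
    intro t X k
    have hdet : IsUnit (G t).det := (Matrix.isUnit_iff_isUnit_det _).1 (hGinv t)
    have hm := Matrix.mul_nonsing_inv (G t) hdet
    simp_rw [Finset.smul_sum, smul_smul]
    rw [Finset.sum_comm]
    simp_rw [← Finset.sum_smul]
    have : ∀ i, ∑ j, (G t)⁻¹ j k * G t i j = (1 : Matrix (Fin n) (Fin n) ℝ) i k := by
      intro i
      rw [← hm, Matrix.mul_apply]
      exact Finset.sum_congr rfl fun j _ => mul_comm _ _
    simp_rw [this, Matrix.one_apply]
    simp
  have hspan : ∀ t, Submodule.span ℝ (Set.range (Sum.elim (B t) (B' t))) = ⊤ := by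
    intro t
    set S := Submodule.span ℝ (Set.range (Sum.elim (B t) (B' t))) with hS
    have hb : ∀ j, B t j ∈ S := fun j => Submodule.subset_span ⟨Sum.inl j, rfl⟩
    have hb' : ∀ j, B' t j ∈ S := fun j => Submodule.subset_span ⟨Sum.inr j, rfl⟩
    have ha : ∀ k, A t k ∈ S := by
      intro k
      rw [← key t (A t) k]
      refine Submodule.sum_mem _ fun j _ => Submodule.smul_mem _ _ ?_
      rw [← hB]
      exact hb j
    have ha' : ∀ k, A' t k ∈ S := by
      intro k
      rw [← key t (A' t) k]
      refine Submodule.sum_mem _ fun j _ => Submodule.smul_mem _ _ ?_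
      have h := hBd t j
      rw [Finset.sum_add_distrib] at h
      rw [← sub_eq_iff_eq_add.2 h]
      exact Submodule.sub_mem _ (hb' j)
        (Submodule.sum_mem _ fun i _ => Submodule.smul_mem _ _ (ha i))
    rw [eq_top_iff, ← (hfan t).2, Submodule.span_le]
    rintro _ ⟨i | i, rfl⟩
    · exact ha i
    · exact ha' i
  refine ⟨fun t => ⟨?_, hspan t⟩, fun t => ?_⟩
  · apply linearIndependent_of_top_le_span_of_card_eq_finrank (hspan t).ge
    simp [hdim, two_mul]
  · apply ContinuousLinearMap.coe_injective
    apply LinearMap.ext_on (hspan t)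
    rintro _ ⟨i | i, rfl⟩
    · simp only [Sum.elim_inl, ContinuousLinearMap.coe_coe, hFB0]
      rw [hB]
      simp [hF0]
    · simp only [Sum.elim_inr, ContinuousLinearMap.coe_coe, hFB1]
      rw [hBd]
      simp [hF0, hF1, hB]
end

section
/- Fanning is equivalent to nondegeneracy of the Wronskian for Lagrangian curves: Let ω be a symplectic bilinear form on V and A = (a_1, …, a_n) : ℝ → V^n a smooth Lagrangian frame such that a_1(t), …, a_n(t) are linearly independent for each t. Then, for each t, the 2n vectors a_1(t), …, a_n(t), ȧ_1(t), …, ȧ_n(t) form a basis of V (i.e. A is fanning at t) if and only if the Wronskian matrix W(t)_{ij} = ω(a_i(t), ȧ_j(t)) is invertible. -/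
/-- **Fanning ⇔ nondegenerate Wronskian for Lagrangian curves.**  Let `ω` be a symplectic
bilinear form on the `2n`-dimensional space `V` and `A` a smooth Lagrangian frame with
`a_1(t), …, a_n(t)` linearly independent for each `t`.  Then `A` is fanning at `t`
(i.e. `a_1(t), …, a_n(t), ȧ_1(t), …, ȧ_n(t)` form a basis of `V`) if and only if the
Wronskian matrix `W(t)_{ij} = ω(a_i(t), ȧ_j(t))` is invertible. -/
theorem fanning_iff_wronskian_invertible
    {V : Type*} [NormedAddCommGroup V] [NormedSpace ℝ V] [FiniteDimensional ℝ V]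
    {n : ℕ} (hn : 0 < n) (hdim : Module.finrank ℝ V = 2 * n)
    (ω : V →ₗ[ℝ] V →ₗ[ℝ] ℝ)
    (halt : ∀ v, ω v v = 0)
    (hnd : ∀ v, (∀ w, ω v w = 0) → v = 0)
    (A A' : ℝ → Fin n → V)
    (hA : ∀ i, ContDiff ℝ (⊤ : ℕ∞) (fun t => A t i))
    (hA' : ∀ i t, HasDerivAt (fun s => A s i) (A' t i) t)
    (hind : ∀ t, LinearIndependent ℝ (A t))
    (hLag : ∀ t i j, ω (A t i) (A t j) = 0) :
    ∀ t, (LinearIndependent ℝ (Sum.elim (A t) (A' t)) ∧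
        Submodule.span ℝ (Set.range (Sum.elim (A t) (A' t))) = ⊤) ↔
      IsUnit (Matrix.of fun i j => ω (A t i) (A' t j)) := by
  intro t
  constructor
  · rintro ⟨-, hspan⟩
    rw [← Matrix.vecMul_injective_iff_isUnit]
    rw [← Matrix.coe_vecMulLinear, injective_iff_map_eq_zero]
    intro c hc
    have hv : ∑ i, c i • A t i = 0 := by
      apply hnd
      have hle : Submodule.span ℝ (Set.range (Sum.elim (A t) (A' t))) ≤
          LinearMap.ker (ω (∑ i, c i • A t i)) := by
        rw [Submodule.span_le]
        rintro _ ⟨j | j, rfl⟩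
        · simp [hLag]
        · have := congrFun hc j
          simpa [Matrix.vecMul, dotProduct] using this
      intro w
      have hw : w ∈ Submodule.span ℝ (Set.range (Sum.elim (A t) (A' t))) := by
        rw [hspan]; trivial
      exact hle hw
    funext i
    exact Fintype.linearIndependent_iff.1 (hind t) c hv i
  · intro hW
    have hli : LinearIndependent ℝ (Sum.elim (A t) (A' t)) := by
      rw [Fintype.linearIndependent_iff]
      intro g hg
      rw [Fintype.sum_sum_type] at hg
      simp only [Sum.elim_inl, Sum.elim_inr] at hg
      rw [← Matrix.mulVec_injective_iff_isUnit] at hW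
      have hd : (fun j => g (Sum.inr j)) = 0 := by
        apply hW
        rw [Matrix.mulVec_zero]
        funext i
        have := congrArg (ω (A t i)) hg
        simpa [hLag, Matrix.mulVec, dotProduct, mul_comm] using this
      have hd' : ∀ j, g (Sum.inr j) = 0 := fun j => congrFun hd j
      simp only [hd', zero_smul, Finset.sum_const_zero, add_zero] at hg
      rintro (i | j)
      · exact Fintype.linearIndependent_iff.1 (hind t) (fun i => g (Sum.inl i)) hg i
      · exact hd' j
    refine ⟨hli, hli.span_eq_top_of_card_eq_finrank' ?_⟩
    rw [hdim, Fintype.card_sum, Fintype.card_fin, two_mul]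
end

section
/- The symplectic reduction of a fanning Lagrangian curve is fanning, with the same Wronskian: In the reduction setting, the reduced frame Ā = (π∘a_1, …, π∘a_k) : ℝ → (𝕎/𝕎^ω)^k is a fanning frame in the symplectic vector space (𝕎/𝕎^ω, ω_R); that is, for every t the vectors π(a_1(t)), …, π(a_k(t)) together with their derivatives form a basis of 𝕎/𝕎^ω. Moreover its Wronskian matrix equals the corresponding block of the Wronskian of A: ω_R(π(a_i(t)), (d/dt)π(a_j(t))) = ω(a_i(t), ȧ_j(t)) for all i, j ≤ k and all t. -/
theorem aux_linInd {E : Type*} [AddCommGroup E] [Module ℝ E] {k : ℕ}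
    (B : E →ₗ[ℝ] E →ₗ[ℝ] ℝ) (a b : Fin k → E) (h0 : ∀ i j, B (a i) (a j) = 0)
    (hM : IsUnit (Matrix.of fun i j : Fin k => B (a i) (b j))) :
    LinearIndependent ℝ (Sum.elim a b) := by
  rw [Fintype.linearIndependent_iff]
  intro g hg
  simp only [Fintype.sum_sum_type, Sum.elim_inl, Sum.elim_inr] at hg
  have hd : (fun j => g (Sum.inr j)) = 0 := by
    apply Matrix.mulVec_injective_of_isUnit hM
    ext j
    have := congrArg (B (a j)) hg
    simp only [map_add, map_sum, map_smul, h0, map_zero, smul_eq_mul] at this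
    simp only [mul_zero, Finset.sum_const_zero, zero_add] at this
    simp only [Pi.zero_apply, Matrix.mulVec, dotProduct, Matrix.of_apply, mul_zero,
      Finset.sum_const_zero]
    refine Eq.trans ?_ this
    exact Finset.sum_congr rfl fun _ _ => mul_comm _ _
  have hd' : ∀ j, g (Sum.inr j) = 0 := fun j => congrFun hd j
  simp only [hd', zero_smul, Finset.sum_const_zero, add_zero] at hg
  have hc : (fun j => g (Sum.inl j)) = 0 := by
    apply Matrix.vecMul_injective_of_isUnit hM
    ext j
    have := congrArg (fun x => B x (b j)) hg
    simp only [map_sum, map_smul, map_zero, LinearMap.sum_apply, LinearMap.smul_apply,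
      LinearMap.zero_apply, smul_eq_mul] at this
    simpa only [zero_mul, Finset.sum_const_zero, Pi.zero_apply, Matrix.vecMul, dotProduct,
      Matrix.of_apply] using this
  rintro (j | j)
  · exact congrFun hc j
  · exact hd' j

theorem aux_finrank {V : Type*} [AddCommGroup V] [Module ℝ V] [FiniteDimensional ℝ V]
    (ω : V →ₗ[ℝ] V →ₗ[ℝ] ℝ) (halt : ∀ v, ω v v = 0)
    (hnd : ∀ v, (∀ w, ω v w = 0) → v = 0) (S : Submodule ℝ V) :
    Module.finrank ℝ S + Module.finrank ℝ (sympOrtho ω S) = Module.finrank ℝ V := by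
  have hA : LinearMap.IsAlt ω := halt
  have hs : sympOrtho ω S = LinearMap.BilinForm.orthogonal ω S := by
    ext u
    rw [LinearMap.BilinForm.mem_orthogonal_iff]
    constructor
    · intro h s hs
      exact hA.isRefl _ _ (h s hs)
    · intro h s hs
      exact hA.isRefl _ _ (h s hs)
  have hk : LinearMap.ker ω = ⊥ := by
    rw [LinearMap.ker_eq_bot']
    intro v hv
    exact hnd v fun w => by rw [hv]; rfl
  have := LinearMap.BilinForm.finrank_add_finrank_orthogonal' (B := ω) S
  rw [hk, inf_bot_eq, finrank_bot, add_zero] at this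
  rw [hs, this]

/-- **The symplectic reduction of a fanning Lagrangian curve is fanning, with the same
Wronskian.**  In the reduction setting (a Lagrangian fanning frame `A` adapted to a
coisotropic subspace `𝕎`, with `a_1, …, a_k` spanning `ℓ(t) ∩ 𝕎`, the Wronskian
block-diagonal and its upper `k×k` block invertible, `k = n − dim 𝕎^ω`), the reduced
frame `Ā = (π∘a_1, …, π∘a_k)` is a fanning frame in `(𝕎/𝕎^ω, ω_R)` — i.e. the vectors
`π(a_i(t))` together with their derivatives `π(ȧ_i(t))` form a basis of `𝕎/𝕎^ω` —
and `ω_R(π(a_i(t)), π(ȧ_j(t))) = ω(a_i(t), ȧ_j(t))` for all `i, j ≤ k`. -/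
theorem reduced_frame_fanning_same_wronskian
    {V : Type*} [NormedAddCommGroup V] [NormedSpace ℝ V] [FiniteDimensional ℝ V]
    {n : ℕ} (hn : 0 < n) (hdim : Module.finrank ℝ V = 2 * n)
    (ω : V →ₗ[ℝ] V →ₗ[ℝ] ℝ)
    (halt : ∀ v, ω v v = 0)
    (hnd : ∀ v, (∀ w, ω v w = 0) → v = 0)
    (A A' : ℝ → Fin n → V)
    (hA : ∀ i, ContDiff ℝ (⊤ : ℕ∞) (fun t => A t i))
    (hA' : ∀ i t, HasDerivAt (fun s => A s i) (A' t i) t)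
    (hfan : ∀ t, LinearIndependent ℝ (Sum.elim (A t) (A' t)) ∧
      Submodule.span ℝ (Set.range (Sum.elim (A t) (A' t))) = ⊤)
    (hLag : ∀ t i j, ω (A t i) (A t j) = 0)
    (Wsub : Submodule ℝ V)
    (hco : sympOrtho ω Wsub ≤ Wsub)
    (k : ℕ) (hkn : k ≤ n)
    (hk : k + Module.finrank ℝ (sympOrtho ω Wsub) = n)
    (hmem : ∀ t (i : Fin n), (i : ℕ) < k → A t i ∈ Wsub)
    (hmem' : ∀ t (i : Fin n), (i : ℕ) < k → A' t i ∈ Wsub)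
    (hspan : ∀ t, Submodule.span ℝ {v | ∃ i : Fin n, (i : ℕ) < k ∧ v = A t i} =
      Submodule.span ℝ (Set.range (A t)) ⊓ Wsub)
    (hblock : ∀ t (i j : Fin n), (i : ℕ) < k → k ≤ (j : ℕ) → ω (A t i) (A' t j) = 0)
    (hWkinv : ∀ t, IsUnit (Matrix.of fun i j : Fin k =>
      ω (A t (Fin.castLE hkn i)) (A' t (Fin.castLE hkn j))))
    (ωR : (Wsub ⧸ (sympOrtho ω Wsub).comap Wsub.subtype) →ₗ[ℝ]
      (Wsub ⧸ (sympOrtho ω Wsub).comap Wsub.subtype) →ₗ[ℝ] ℝ)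
    (hωR : ∀ u v : Wsub,
      ωR (Submodule.Quotient.mk u) (Submodule.Quotient.mk v) = ω u v) :
    ∀ t,
      (LinearIndependent ℝ (Sum.elim
          (fun i : Fin k => (Submodule.Quotient.mk
            (⟨A t (Fin.castLE hkn i), hmem t (Fin.castLE hkn i) i.isLt⟩ : Wsub) :
            Wsub ⧸ (sympOrtho ω Wsub).comap Wsub.subtype))
          (fun i : Fin k => Submodule.Quotient.mk
            (⟨A' t (Fin.castLE hkn i), hmem' t (Fin.castLE hkn i) i.isLt⟩ : Wsub))) ∧
        Submodule.span ℝ (Set.range (Sum.elim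
          (fun i : Fin k => (Submodule.Quotient.mk
            (⟨A t (Fin.castLE hkn i), hmem t (Fin.castLE hkn i) i.isLt⟩ : Wsub) :
            Wsub ⧸ (sympOrtho ω Wsub).comap Wsub.subtype))
          (fun i : Fin k => Submodule.Quotient.mk
            (⟨A' t (Fin.castLE hkn i), hmem' t (Fin.castLE hkn i) i.isLt⟩ : Wsub)))) = ⊤) ∧
      (∀ i j : Fin k,
        ωR (Submodule.Quotient.mk
            (⟨A t (Fin.castLE hkn i), hmem t (Fin.castLE hkn i) i.isLt⟩ : Wsub))
          (Submodule.Quotient.mk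
            (⟨A' t (Fin.castLE hkn j), hmem' t (Fin.castLE hkn j) j.isLt⟩ : Wsub)) =
        ω (A t (Fin.castLE hkn i)) (A' t (Fin.castLE hkn j))) := by
  intro t
  have hli := aux_linInd ωR
    (fun i : Fin k => (Submodule.Quotient.mk
      (⟨A t (Fin.castLE hkn i), hmem t (Fin.castLE hkn i) i.isLt⟩ : Wsub) :
      Wsub ⧸ (sympOrtho ω Wsub).comap Wsub.subtype))
    (fun i : Fin k => Submodule.Quotient.mk
      (⟨A' t (Fin.castLE hkn i), hmem' t (Fin.castLE hkn i) i.isLt⟩ : Wsub))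
    (fun i j => by rw [hωR]; exact hLag _ _ _)
    (by simpa only [hωR] using hWkinv t)
  refine ⟨⟨hli, hli.span_eq_top_of_card_eq_finrank' ?_⟩, fun i j => hωR _ _⟩
  have h1 := aux_finrank ω halt hnd Wsub
  have h2 := Submodule.finrank_quotient_add_finrank ((sympOrtho ω Wsub).comap Wsub.subtype)
  have h3 := (Submodule.comapSubtypeEquivOfLe hco).finrank_eq
  simp only [Fintype.card_sum, Fintype.card_fin]
  omega
end

section
/- Existence and uniqueness of normal frames: Let A be a fanning frame in V, let τ ∈ ℝ, and let (v_1, …, v_n) be any basis of ℓ(τ). Then there exists a unique smooth frame B = (b_1, …, b_n) : ℝ → V^n such that: b_i(t) ∈ ℓ(t) for all t and i; b_1(t), …, b_n(t) are linearly independent for each t; b_i(τ) = v_i for all i; and B is normal, meaning b̈_j(t) ∈ ℓ(t) for all t and j (equivalently, the matrix P in the relation B̈ + ḂP + BQ = 0 vanishes identically). Moreover this B is fanning. -/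
open Set Metric
open scoped ContDiff NNReal


theorem ode_icc {ι : Type*} [Fintype ι] (M : ℝ → (ι → ℝ) →L[ℝ] (ι → ℝ)) (hM : Continuous M)
    (τ T : ℝ) (hT : 0 ≤ T) (x₀ : ι → ℝ) :
    ∃ α : ℝ → ι → ℝ, α τ = x₀ ∧ ∀ t ∈ Ioo (τ - T) (τ + T), HasDerivAt α (M t (α t)) t := by
  obtain ⟨C, hC⟩ := (isCompact_Icc (a := τ - T) (b := τ + T)).exists_bound_of_continuousOn hM.continuousOn
  have hC0 : 0 ≤ C := (norm_nonneg _).trans (hC τ (by constructor <;> linarith))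
  set R : ℝ := ‖x₀‖ * Real.exp (C * T) with hR
  have hR0 : 0 ≤ R := by positivity
  let ρ : (ι → ℝ) → (ι → ℝ) := fun x i => max (-R) (min R (x i))
  have hρ1 : ∀ x, ‖ρ x‖ ≤ R := by
    intro x
    rw [pi_norm_le_iff_of_nonneg hR0]
    intro i
    rw [Real.norm_eq_abs, abs_le]
    exact ⟨le_max_left _ _, max_le (by linarith) (min_le_left _ _)⟩
  have hρ2 : ∀ x, ‖ρ x‖ ≤ ‖x‖ := by
    intro x
    rw [pi_norm_le_iff_of_nonneg (norm_nonneg _)]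
    intro i
    refine le_trans ?_ (norm_le_pi_norm x i)
    simp only [ρ, Real.norm_eq_abs]
    grind
  have hρ3 : ∀ x, ‖x‖ ≤ R → ρ x = x := by
    intro x hx
    funext i
    have := (norm_le_pi_norm x i).trans hx
    rw [Real.norm_eq_abs, abs_le] at this
    simp only [ρ]
    rw [min_eq_right this.2, max_eq_right this.1]
  have hρ4 : LipschitzWith 1 ρ := by
    refine LipschitzWith.of_dist_le_mul fun x y => ?_
    simp only [NNReal.coe_one, one_mul]
    rw [dist_pi_le_iff dist_nonneg]
    intro i
    refine le_trans ?_ (dist_le_pi_dist x y i)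
    simp only [ρ, Real.dist_eq]
    grind
  let Cn : ℝ≥0 := ⟨C, hC0⟩
  let Rn : ℝ≥0 := ⟨R, hR0⟩
  let Tn : ℝ≥0 := ⟨T, hT⟩
  have hτ : τ ∈ Icc (τ - T) (τ + T) := by constructor <;> linarith
  have hPL : IsPicardLindelof (fun t x => M t (ρ x)) (⟨τ, hτ⟩ : Icc (τ - T) (τ + T)) x₀
      (Cn * Rn * Tn) 0 (Cn * Rn) Cn := by
    refine ⟨?_, ?_, ?_, ?_⟩
    · intro t ht
      have h1 : LipschitzWith Cn (M t) := (M t).lipschitz.weaken (hC t ht)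
      have := h1.comp hρ4
      rw [mul_one] at this
      exact this.lipschitzOnWith
    · intro x _
      exact (hM.clm_apply continuous_const).continuousOn
    · intro t ht x _
      calc ‖M t (ρ x)‖ ≤ ‖M t‖ * ‖ρ x‖ := (M t).le_opNorm _
        _ ≤ C * R := mul_le_mul (hC t ht) (hρ1 x) (norm_nonneg _) hC0
    · simp only [add_sub_cancel_left, sub_sub_cancel, max_self, NNReal.coe_zero, sub_zero]
      exact le_rfl
  obtain ⟨α, hα0, hα⟩ := hPL.exists_eq_forall_mem_Icc_hasDerivWithinAt₀
  have hder : ∀ t ∈ Ioo (τ - T) (τ + T), HasDerivAt α (M t (ρ (α t))) t := fun t ht =>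
    (hα t (Ioo_subset_Icc_self ht)).hasDerivAt (Icc_mem_nhds ht.1 ht.2)
  have hcont : ContinuousOn α (Icc (τ - T) (τ + T)) := fun t ht => (hα t ht).continuousWithinAt
  have hb : ∀ t ∈ Icc (τ - T) (τ + T), ‖M t (ρ (α t))‖ ≤ C * ‖α t‖ := fun t ht =>
    ((M t).le_opNorm _).trans (mul_le_mul (hC t ht) (hρ2 _) (norm_nonneg _) hC0)
  have hα0' : α τ = x₀ := hα0
  have hexp : ∀ s, s ≤ T → ‖x₀‖ * Real.exp (C * s) ≤ R := fun s hs => by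
    rw [hR]; gcongr
  have hfwd : ∀ t ∈ Ico τ (τ + T), ‖α t‖ ≤ R := by
    intro t ht
    rcases eq_or_lt_of_le hT with h0 | hTpos
    · have := ht.1; have := ht.2; linarith
    have := norm_le_gronwallBound_of_norm_deriv_right_le (f := α) (f' := fun t => M t (ρ (α t)))
      (δ := ‖x₀‖) (K := C) (ε := 0) (a := τ) (b := τ + T)
      (hcont.mono (Icc_subset_Icc (by linarith) le_rfl))
      (fun s hs => (hder s ⟨by linarith [hs.1], hs.2⟩).hasDerivWithinAt)
      (by rw [hα0']) (fun s hs => by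
        rw [add_zero]; exact hb s ⟨by linarith [hs.1], hs.2.le⟩) t ⟨ht.1, ht.2.le⟩
    rw [gronwallBound_ε0] at this
    exact this.trans (hexp _ (by linarith [ht.2]))
  have hbwd : ∀ t ∈ Ioc (τ - T) τ, ‖α t‖ ≤ R := by
    intro t ht
    rcases eq_or_lt_of_le hT with h0 | hTpos
    · have := ht.1; have := ht.2; linarith
    have := norm_le_gronwallBound_of_norm_deriv_right_le (f := fun s => α (τ - s))
      (f' := fun s => - M (τ - s) (ρ (α (τ - s))))
      (δ := ‖x₀‖) (K := C) (ε := 0) (a := 0) (b := T)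
      (hcont.comp (by fun_prop) (fun s hs => ⟨by linarith [hs.2], by linarith [hs.1]⟩))
      (fun s hs => by
        have h := hder (τ - s) ⟨by linarith [hs.2], by linarith [hs.1]⟩
        exact (h.comp_const_sub τ s).hasDerivWithinAt)
      (by simp [hα0']) (fun s hs => by
        rw [add_zero, norm_neg]; exact hb _ ⟨by linarith [hs.2], by linarith [hs.1]⟩) (τ - t)
          ⟨by linarith [ht.2], by linarith [ht.1]⟩
    rw [gronwallBound_ε0] at this
    simp only [sub_sub_cancel, sub_zero] at this
    exact this.trans (hexp _ (by linarith [ht.1]))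
  refine ⟨α, hα0', fun t ht => ?_⟩
  have hle : ‖α t‖ ≤ R := by
    rcases le_total τ t with h | h
    · exact hfwd t ⟨h, ht.2⟩
    · exact hbwd t ⟨ht.1, h⟩
  have := hder t ht
  rwa [hρ3 _ hle] at this

theorem ode_uniq {ι : Type*} [Fintype ι] (M : ℝ → (ι → ℝ) →L[ℝ] (ι → ℝ)) (hM : Continuous M)
    (τ a b : ℝ) (hτ : τ ∈ Ioo a b) (f g : ℝ → ι → ℝ)
    (hf : ∀ t ∈ Ioo a b, HasDerivAt f (M t (f t)) t)
    (hg : ∀ t ∈ Ioo a b, HasDerivAt g (M t (g t)) t) (h : f τ = g τ) :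
    EqOn f g (Ioo a b) := by
  obtain ⟨C, hC⟩ := (isCompact_Icc (a := a) (b := b)).exists_bound_of_continuousOn hM.continuousOn
  have hC0 : 0 ≤ C := (norm_nonneg _).trans (hC τ ⟨hτ.1.le, hτ.2.le⟩)
  refine ODE_solution_unique_of_mem_Ioo (v := fun t x => M t x) (s := fun _ => univ)
    (K := ⟨C, hC0⟩) (fun t ht => ?_) hτ (fun t ht => ⟨hf t ht, trivial⟩)
    (fun t ht => ⟨hg t ht, trivial⟩) h
  have h1 : LipschitzWith ⟨C, hC0⟩ (M t) := (M t).lipschitz.weaken (hC t ⟨ht.1.le, ht.2.le⟩)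
  exact h1.lipschitzOnWith

theorem ode_uniq_univ {ι : Type*} [Fintype ι] (M : ℝ → (ι → ℝ) →L[ℝ] (ι → ℝ)) (hM : Continuous M)
    (τ : ℝ) (f g : ℝ → ι → ℝ)
    (hf : ∀ t, HasDerivAt f (M t (f t)) t)
    (hg : ∀ t, HasDerivAt g (M t (g t)) t) (h : f τ = g τ) :
    f = g := by
  funext t
  refine ode_uniq M hM τ (τ - (|t - τ| + 1)) (τ + (|t - τ| + 1)) ?_ f g (fun t _ => hf t)
    (fun t _ => hg t) h ?_
  · constructor <;> linarith [abs_nonneg (t - τ)]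
  · constructor <;> linarith [le_abs_self (t - τ), neg_abs_le (t - τ)]

theorem ode_global {ι : Type*} [Fintype ι] (M : ℝ → (ι → ℝ) →L[ℝ] (ι → ℝ)) (hM : Continuous M)
    (τ : ℝ) (x₀ : ι → ℝ) :
    ∃ α : ℝ → ι → ℝ, α τ = x₀ ∧ ∀ t, HasDerivAt α (M t (α t)) t := by
  have key : ∀ T : ℝ, ∃ α : ℝ → ι → ℝ, 0 ≤ T → (α τ = x₀ ∧
      ∀ t ∈ Ioo (τ - T) (τ + T), HasDerivAt α (M t (α t)) t) := by
    intro T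
    by_cases hT : 0 ≤ T
    · obtain ⟨α, h⟩ := ode_icc M hM τ T hT x₀
      exact ⟨α, fun _ => h⟩
    · exact ⟨0, fun h => absurd h hT⟩
  choose F hF using key
  have agree : ∀ S T : ℝ, 0 < S → S ≤ T → EqOn (F S) (F T) (Ioo (τ - S) (τ + S)) := by
    intro S T hS hST
    refine ode_uniq M hM τ _ _ ⟨by linarith, by linarith⟩ _ _ (hF S hS.le).2
      (fun t ht => (hF T (by linarith)).2 t ⟨by linarith [ht.1], by linarith [ht.2]⟩) ?_
    rw [(hF S hS.le).1, (hF T (by linarith)).1]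
  let α : ℝ → ι → ℝ := fun t => F (|t - τ| + 1) t
  have hα : ∀ T t, 0 < T → t ∈ Ioo (τ - T) (τ + T) → α t = F T t := by
    intro T t hT ht
    have htm : t ∈ Ioo (τ - (|t - τ| + 1)) (τ + (|t - τ| + 1)) := by
      constructor <;> linarith [le_abs_self (t - τ), neg_abs_le (t - τ)]
    rcases le_total T (|t - τ| + 1) with h | h
    · exact (agree _ _ hT h ht).symm
    · exact agree _ _ (by positivity) h htm
  refine ⟨α, ?_, fun t => ?_⟩
  · rw [hα 1 τ one_pos ⟨by linarith, by linarith⟩]; exact (hF 1 zero_le_one).1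
  · have hT : 0 < |t - τ| + 1 := by positivity
    have htm : t ∈ Ioo (τ - (|t - τ| + 1)) (τ + (|t - τ| + 1)) := by
      constructor <;> linarith [le_abs_self (t - τ), neg_abs_le (t - τ)]
    have := (hF _ hT.le).2 t htm
    rw [← hα _ t hT htm] at this
    refine this.congr_of_eventuallyEq ?_
    filter_upwards [Ioo_mem_nhds htm.1 htm.2] with s hs
    exact hα _ s hT hs

theorem ode_smooth {ι : Type*} [Fintype ι] (M : ℝ → (ι → ℝ) →L[ℝ] (ι → ℝ)) (hM : ContDiff ℝ ∞ M)
    (α : ℝ → ι → ℝ) (h : ∀ t, HasDerivAt α (M t (α t)) t) : ContDiff ℝ ∞ α := by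
  rw [contDiff_infty]
  intro k
  have hd : deriv α = fun t => M t (α t) := funext fun t => (h t).deriv
  induction k with
  | zero => exact contDiff_zero.2 (Differentiable.continuous fun t => (h t).differentiableAt)
  | succ k ih =>
    push_cast
    rw [contDiff_succ_iff_deriv]
    refine ⟨fun t => (h t).differentiableAt, by simp, ?_⟩
    rw [hd]
    exact (hM.of_le (by exact_mod_cast le_top)).clm_apply ih

theorem frame_coords {V : Type*} [NormedAddCommGroup V] [NormedSpace ℝ V] [FiniteDimensional ℝ V]
    {κ : Type*} [Fintype κ] (E : ℝ → κ → V) (hE : ∀ k, ContDiff ℝ ∞ (fun t => E t k))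
    (hli : ∀ t, LinearIndependent ℝ (E t)) (hsp : ∀ t, Submodule.span ℝ (range (E t)) = ⊤)
    (w : ℝ → V) (hw : ContDiff ℝ ∞ w) :
    ∃ c : ℝ → κ → ℝ, ContDiff ℝ ∞ c ∧ ∀ t, ∑ k, c t k • E t k = w t := by
  let Φ : ℝ → (κ → ℝ) →L[ℝ] V := fun t =>
    ∑ k, (ContinuousLinearMap.proj (R := ℝ) (φ := fun _ : κ => ℝ) k).smulRight (E t k)
  have hΦ : ∀ t c, Φ t c = ∑ k, c k • E t k := by
    intro t c
    simp [Φ]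
  have hΦs : ContDiff ℝ ∞ Φ := by
    refine ContDiff.sum fun k _ => ?_
    exact (ContinuousLinearMap.smulRightL ℝ (κ → ℝ) V
      (ContinuousLinearMap.proj (R := ℝ) (φ := fun _ : κ => ℝ) k)).contDiff.comp (hE k)
  have heq : ∀ t, ∃ e : (κ → ℝ) ≃L[ℝ] V, (e : (κ → ℝ) →L[ℝ] V) = Φ t := by
    intro t
    let b := Module.Basis.mk (hli t) (hsp t).ge
    refine ⟨b.equivFun.symm.toContinuousLinearEquiv, ?_⟩
    ext1 c
    rw [hΦ]
    simp [b, Module.Basis.equivFun_symm_apply]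
  refine ⟨fun t => (Φ t).inverse (w t), ?_, fun t => ?_⟩
  · refine ContDiff.clm_apply ?_ hw
    rw [contDiff_iff_contDiffAt]
    intro t
    obtain ⟨e, he⟩ := heq t
    have := contDiffAt_map_inverse (n := ∞) e
    rw [he] at this
    exact this.comp t hΦs.contDiffAt
  · rw [← hΦ]
    obtain ⟨e, he⟩ := heq t
    show Φ t ((Φ t).inverse (w t)) = w t
    rw [← he, ContinuousLinearMap.inverse_equiv]
    simp

theorem comb_deriv {V : Type*} [NormedAddCommGroup V] [NormedSpace ℝ V]
    {n : ℕ} (A A' : ℝ → Fin n → V)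
    (hA' : ∀ i t, HasDerivAt (fun s => A s i) (A' t i) t)
    (x x' : ℝ → Fin n → ℝ) (hx : ∀ t, HasDerivAt x (x' t) t) (t : ℝ) :
    HasDerivAt (fun s => ∑ i, x s i • A s i) (∑ i, x' t i • A t i + ∑ i, x t i • A' t i) t := by
  rw [add_comm, ← Finset.sum_add_distrib]
  refine HasDerivAt.fun_sum fun i _ => ?_
  exact (hasDerivAt_pi.1 (hx t) i).smul (hA' i t)

theorem normal_frame_exists_unique
    {V : Type*} [NormedAddCommGroup V] [NormedSpace ℝ V] [FiniteDimensional ℝ V]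
    {n : ℕ} (hn : 0 < n) (hdim : Module.finrank ℝ V = 2 * n)
    (A A' : ℝ → Fin n → V)
    (hA : ∀ i, ContDiff ℝ (⊤ : ℕ∞) (fun t => A t i))
    (hA' : ∀ i t, HasDerivAt (fun s => A s i) (A' t i) t)
    (hfan : ∀ t, LinearIndependent ℝ (Sum.elim (A t) (A' t)) ∧
      Submodule.span ℝ (Set.range (Sum.elim (A t) (A' t))) = ⊤)
    (τ : ℝ) (v : Fin n → V)
    (hvind : LinearIndependent ℝ v)
    (hvspan : Submodule.span ℝ (Set.range v) = Submodule.span ℝ (Set.range (A τ))) :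
    ∃ B : ℝ → Fin n → V,
      (((∀ i, ContDiff ℝ (⊤ : ℕ∞) (fun t => B t i)) ∧
        (∀ t i, B t i ∈ Submodule.span ℝ (Set.range (A t))) ∧
        (∀ t, LinearIndependent ℝ (B t)) ∧
        (∀ i, B τ i = v i) ∧
        (∀ t j, deriv (deriv (fun u => B u j)) t ∈ Submodule.span ℝ (Set.range (A t)))) ∧
       -- moreover, this frame is fanning
       (∀ t, LinearIndependent ℝ
           (Sum.elim (B t) (fun j => deriv (fun u => B u j) t)) ∧
         Submodule.span ℝ (Set.range
           (Sum.elim (B t) (fun j => deriv (fun u => B u j) t))) = ⊤)) ∧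
      -- uniqueness among frames with the listed properties
      (∀ B₂ : ℝ → Fin n → V,
        ((∀ i, ContDiff ℝ (⊤ : ℕ∞) (fun t => B₂ t i)) ∧
         (∀ t i, B₂ t i ∈ Submodule.span ℝ (Set.range (A t))) ∧
         (∀ t, LinearIndependent ℝ (B₂ t)) ∧
         (∀ i, B₂ τ i = v i) ∧
         (∀ t j, deriv (deriv (fun u => B₂ u j)) t ∈
            Submodule.span ℝ (Set.range (A t)))) → B₂ = B) := by
  have hAd : ∀ i, deriv (fun s => A s i) = fun t => A' t i := fun i =>
    funext fun t => (hA' i t).deriv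
  have hA's : ∀ i, ContDiff ℝ ∞ (fun t => A' t i) := fun i => by
    rw [← hAd]; exact (contDiff_infty_iff_deriv.1 (hA i)).2
  have hA'' : ∀ i t, HasDerivAt (fun s => A' s i) (deriv (fun s => A' s i) t) t := fun i t =>
    ((contDiff_infty_iff_deriv.1 (hA's i)).1 t).hasDerivAt
  have hEs : ∀ k : Fin n ⊕ Fin n, ContDiff ℝ ∞ (fun t => Sum.elim (A t) (A' t) k) := by
    rintro (i | i)
    · exact hA i
    · exact hA's i
  have hcoord := frame_coords (fun t => Sum.elim (A t) (A' t)) hEs (fun t => (hfan t).1)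
    (fun t => (hfan t).2)
  -- independence in split form
  have hind : ∀ t (c d : Fin n → ℝ), ∑ i, c i • A t i + ∑ i, d i • A' t i = 0 →
      c = 0 ∧ d = 0 := by
    intro t c d h
    have := Fintype.linearIndependent_iff.1 (hfan t).1 (Sum.elim c d) (by
      simpa [Fintype.sum_sum_type] using h)
    exact ⟨funext fun i => this (Sum.inl i), funext fun i => this (Sum.inr i)⟩
  have hspan : ∀ t (c d : Fin n → ℝ), ∑ i, c i • A t i + ∑ i, d i • A' t i ∈
      Submodule.span ℝ (range (A t)) ↔ d = 0 := by
    intro t c d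
    constructor
    · intro h
      obtain ⟨e, he⟩ := (Submodule.mem_span_range_iff_exists_fun ℝ).1 h
      refine (hind t (c - e) d ?_).2
      simp only [Pi.sub_apply, sub_smul, Finset.sum_sub_distrib]
      rw [he]; abel
    · rintro rfl
      refine (Submodule.mem_span_range_iff_exists_fun ℝ).2 ⟨c, by simp⟩
  -- the matrices P and Q
  have hPQ : ∀ i, ∃ c : ℝ → Fin n ⊕ Fin n → ℝ, ContDiff ℝ ∞ c ∧
      ∀ t, ∑ k, c t k • Sum.elim (A t) (A' t) k = deriv (fun s => A' s i) t := fun i =>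
    hcoord _ (contDiff_infty_iff_deriv.1 (hA's i)).2
  choose C hCs hC using hPQ
  let N : ℝ → (Fin n → ℝ) →L[ℝ] (Fin n → ℝ) := fun t =>
    ∑ i, (ContinuousLinearMap.proj (R := ℝ) (φ := fun _ : Fin n => ℝ) i).smulRight
      (fun k => -(1/2) * C i t (Sum.inr k))
  have hN : ∀ t x k, N t x k = -(1/2) * ∑ i, x i * C i t (Sum.inr k) := by
    intro t x k
    simp only [N, sum_apply, Finset.sum_apply,
      ContinuousLinearMap.smulRight_apply, ContinuousLinearMap.proj_apply, Pi.smul_apply,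
      smul_eq_mul, Finset.mul_sum]
    exact Finset.sum_congr rfl fun i _ => by ring
  have hNs : ContDiff ℝ ∞ N := by
    refine ContDiff.sum fun i _ => ?_
    refine (ContinuousLinearMap.smulRightL ℝ (Fin n → ℝ) (Fin n → ℝ)
      (ContinuousLinearMap.proj (R := ℝ) (φ := fun _ : Fin n => ℝ) i)).contDiff.comp ?_
    rw [contDiff_pi]
    intro k
    exact contDiff_const.mul (contDiff_pi.1 (hCs i) (Sum.inr k))
  have hNc : Continuous N := hNs.continuous
  -- the second derivative
  have hdd : ∀ x : ℝ → Fin n → ℝ, ContDiff ℝ ∞ x → ∀ t,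
      (deriv (deriv (fun u => ∑ i, x u i • A u i)) t ∈ Submodule.span ℝ (range (A t)) ↔
        HasDerivAt x (N t (x t)) t) := by
    intro x hx t
    obtain ⟨hx1, hx2⟩ := contDiff_infty_iff_deriv.1 hx
    obtain ⟨hx3, -⟩ := contDiff_infty_iff_deriv.1 hx2
    have h1 : deriv (fun u => ∑ i, x u i • A u i) =
        fun u => ∑ i, deriv x u i • A u i + ∑ i, x u i • A' u i := funext fun u =>
      (comb_deriv A A' hA' x (deriv x) (fun s => (hx1 s).hasDerivAt) u).deriv
    have h2 := (comb_deriv A A' hA' (deriv x) (deriv (deriv x)) (fun s => (hx3 s).hasDerivAt) t).add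
      (comb_deriv A' (fun t i => deriv (fun s => A' s i) t) hA'' x (deriv x)
        (fun s => (hx1 s).hasDerivAt) t)
    have h3 : deriv (deriv (fun u => ∑ i, x u i • A u i)) t =
        (∑ i, deriv (deriv x) t i • A t i + ∑ i, deriv x t i • A' t i +
        (∑ i, deriv x t i • A' t i + ∑ i, x t i • deriv (fun s => A' s i) t)) := by
      rw [h1]; exact h2.deriv
    have h4 : ∑ i, x t i • deriv (fun s => A' s i) t =
        ∑ k, (∑ i, x t i * C i t (Sum.inl k)) • A t k +
        ∑ k, (∑ i, x t i * C i t (Sum.inr k)) • A' t k := by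
      simp only [← hC, Fintype.sum_sum_type, Sum.elim_inl, Sum.elim_inr, smul_add,
        Finset.sum_add_distrib, Finset.smul_sum, Finset.sum_smul, smul_smul]
      rw [Finset.sum_comm]
      congr 1
      rw [Finset.sum_comm]
    have h5 : deriv (deriv (fun u => ∑ i, x u i • A u i)) t =
        ∑ k, (deriv (deriv x) t k + ∑ i, x t i * C i t (Sum.inl k)) • A t k +
        ∑ k, (2 * deriv x t k + ∑ i, x t i * C i t (Sum.inr k)) • A' t k := by
      rw [h3, h4]
      simp only [add_smul, Finset.sum_add_distrib, two_mul]
      abel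
    rw [h5, hspan t (fun k => deriv (deriv x) t k + ∑ i, x t i * C i t (Sum.inl k))
      (fun k => 2 * deriv x t k + ∑ i, x t i * C i t (Sum.inr k))]
    constructor
    · intro h
      have : N t (x t) = deriv x t := by
        funext k
        have := congrFun h k
        simp only [Pi.zero_apply] at this
        rw [hN]; linarith
      rw [this]
      exact (hx1 t).hasDerivAt
    · intro h
      funext k
      have := congrFun h.deriv k
      rw [hN] at this
      simp only [Pi.zero_apply]
      linarith
  -- initial data
  have hv : ∀ j, ∃ c : Fin n → ℝ, ∑ i, c i • A τ i = v j := fun j =>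
    (Submodule.mem_span_range_iff_exists_fun ℝ).1
      (hvspan ▸ Submodule.subset_span (mem_range_self j))
  choose x₀ hx₀ using hv
  choose X hX0 hX using fun j => ode_global N hNc τ (x₀ j)
  have hXs : ∀ j, ContDiff ℝ ∞ (X j) := fun j => ode_smooth N hNs (X j) (hX j)
  have hcomb : ∀ t (c : Fin n → ℝ), ∑ j, c j • X j t = 0 → c = 0 := by
    intro t c h
    have hsol : (fun s => ∑ j, c j • X j s) = fun _ => 0 := by
      refine ode_uniq_univ N hNc t _ _ (fun s => ?_) (fun s => ?_) h
      · rw [map_sum]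
        refine HasDerivAt.fun_sum fun j _ => ?_
        rw [map_smul]
        exact (hX j s).const_smul (c j)
      · rw [map_zero]; exact hasDerivAt_const _ _
    have h1 : ∑ j, c j • x₀ j = 0 := by
      have := congrFun hsol τ
      simpa [hX0] using this
    funext j
    refine Fintype.linearIndependent_iff.1 hvind c ?_ j
    simp only [← hx₀, Finset.smul_sum, smul_smul]
    rw [Finset.sum_comm]
    refine Finset.sum_eq_zero fun i _ => ?_
    rw [← Finset.sum_smul]
    have := congrFun h1 i
    simp only [Finset.sum_apply, Pi.smul_apply, smul_eq_mul, Pi.zero_apply] at this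
    rw [this, zero_smul]
  have hder : ∀ j t, deriv (fun u => ∑ i, X j u i • A u i) t =
      ∑ i, N t (X j t) i • A t i + ∑ i, X j t i • A' t i := fun j t =>
    (comb_deriv A A' hA' (X j) (fun s => N s (X j s)) (hX j) t).deriv
  have hswap : ∀ (c : Fin n → ℝ) (Y : Fin n → Fin n → ℝ) (W : Fin n → V),
      ∑ j, c j • ∑ i, Y j i • W i = ∑ i, (∑ j, c j • Y j) i • W i := by
    intro c Y W
    simp only [Finset.smul_sum, smul_smul, Finset.sum_apply, Pi.smul_apply, smul_eq_mul,
      Finset.sum_smul]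
    exact Finset.sum_comm
  have hlin : ∀ t, LinearIndependent ℝ (Sum.elim (fun j => ∑ i, X j t i • A t i)
      (fun j => deriv (fun u => ∑ i, X j u i • A u i) t)) := by
    intro t
    rw [Fintype.linearIndependent_iff]
    intro g hg
    simp only [Fintype.sum_sum_type, Sum.elim_inl, Sum.elim_inr, hder, smul_add,
      Finset.sum_add_distrib] at hg
    rw [hswap (fun j => g (Sum.inl j)) (fun j => X j t),
      hswap (fun j => g (Sum.inr j)) (fun j => N t (X j t)),
      hswap (fun j => g (Sum.inr j)) (fun j => X j t), ← add_assoc,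
      ← Finset.sum_add_distrib] at hg
    simp only [← add_smul] at hg
    obtain ⟨h1, h2⟩ := hind t _ _ hg
    have hd := hcomb t _ h2
    have hd' : ∀ j, g (Sum.inr j) = 0 := fun j => congrFun hd j
    have hc := hcomb t (fun j => g (Sum.inl j)) (by
      funext i
      have := congrFun h1 i
      simpa [hd'] using this)
    rintro (j | j)
    · exact congrFun hc j
    · exact hd' j
  refine ⟨fun t j => ∑ i, X j t i • A t i, ⟨⟨?_, ?_, ?_, ?_, ?_⟩, ?_⟩, ?_⟩
  · intro j
    exact ContDiff.sum fun i _ => (contDiff_pi.1 (hXs j) i).smul (hA i)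
  · intro t j
    exact (Submodule.mem_span_range_iff_exists_fun ℝ).2 ⟨_, rfl⟩
  · intro t
    exact (hlin t).comp Sum.inl Sum.inl_injective
  · intro j
    simp only [hX0, hx₀]
  · intro t j
    exact (hdd (X j) (hXs j) t).2 (hX j t)
  · intro t
    refine ⟨hlin t, (hlin t).span_eq_top_of_card_eq_finrank' ?_⟩
    rw [hdim]; simp [two_mul]
  · rintro B₂ ⟨hs, hm, -, h0, hn2⟩
    funext t j
    obtain ⟨c, hcs, hc⟩ := hcoord (fun t => B₂ t j) (hs j)
    have hc' : ∀ t, B₂ t j = ∑ i, c t (Sum.inl i) • A t i := by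
      intro t
      have h1 := hc t
      simp only [Fintype.sum_sum_type, Sum.elim_inl, Sum.elim_inr] at h1
      have h2 := hm t j
      rw [← h1, hspan t (fun i => c t (Sum.inl i)) (fun i => c t (Sum.inr i))] at h2
      have h3 : ∀ i, c t (Sum.inr i) = 0 := fun i => congrFun h2 i
      rw [← h1]
      simp [h3]
    let y : ℝ → Fin n → ℝ := fun t i => c t (Sum.inl i)
    have hys : ContDiff ℝ ∞ y := contDiff_pi.2 fun i => contDiff_pi.1 hcs (Sum.inl i)
    have hB : (fun u => B₂ u j) = fun u => ∑ i, y u i • A u i := funext hc'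
    have hy : ∀ t, HasDerivAt y (N t (y t)) t := by
      intro t
      rw [← hdd y hys t, ← hB]
      exact hn2 t j
    have hyX : y = X j := by
      refine ode_uniq_univ N hNc τ _ _ hy (hX j) ?_
      rw [hX0]
      refine sub_eq_zero.1 (hind τ (y τ - x₀ j) 0 ?_).1
      simp only [Pi.sub_apply, sub_smul, Finset.sum_sub_distrib, Pi.zero_apply, zero_smul,
        Finset.sum_const_zero, add_zero, hx₀]
      rw [← h0 j, hc' τ, sub_self]
    rw [← hyX]
    exact hc' t
end
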